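/- arXiv:1902.05221 — 4 statements merged into one kernel-verified Lean document; each statement's English description precedes it below -/
import Mathlib

section
/- Crandall–Rabinowitz bifurcation theorem: Let X and Y be real Banach spaces, (λ̄, x̄) ∈ ℝ × X, and let F be a C¹ map from an open neighbourhood of (λ̄, x̄) in ℝ × X into Y. Assume: (i) the kernel of D₂F at (λ̄, x̄) is one-dimensional, spanned by some x₀ ≠ 0; (ii) the range of D₂F at (λ̄, x̄) is a closed subspace of Y of codimension 1; (iii) D₁F at (λ̄, x̄), evaluated at 1 ∈ ℝ, does not lie in the range of D₂F. Let Z be a closed subspace of X complementary to span{x₀} (i.e. Z ∩ span{x₀} = {0} and Z + span{x₀} = X). Then there exist ε > 0, a neighbourhood U of (λ̄, x̄) in ℝ × X, and C¹ functions τ : (−ε, ε) → ℝ and z : (−ε, ε) → Z with τ(0) = τ′(0) = 0 and z(0) = z′(0) = 0, such that the set of solutions of F(λ, x) = F(λ̄, x̄) in U is exactly the curve {(λ̄ + τ(s), x̄ + s·x₀ + z(s)) : |s| < ε}. -/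
open Set Filter

/-!
The transversality condition lets the curve be obtained from a single application of the inverse
function theorem. Let `φ : X → ℝ` be the continuous functional with kernel `Z` and `φ v0 = 1`, and
consider `Φ (λ, x) = (φ (x - x0), F (λ, x))`. Its derivative at `(lam0, x0)` is
`(t, v) ↦ (φ v, t • D₁F + D₂F v)`. This is injective because `D₁F` avoids the range of `D₂F` and
`φ` is nonzero on the kernel of `D₂F`; it is surjective because the range of `D₂F` has codimension
one and is therefore supplemented by `D₁F`, and the kernel of `D₂F` can be used to adjust `φ v`
freely. By the open mapping theorem `Φ` is then a local `C¹` diffeomorphism, and the solutions near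
`(lam0, x0)` are the curve `s ↦ Φ⁻¹ (s, F (lam0, x0))`. Since the derivative of `Φ` maps `(0, v0)`
to `(1, 0)`, the tangent of this curve at `s = 0` is `(0, v0)`, so that `τ'` and `z'` vanish there.
-/

/-- The coordinate functional along `v` associated with a closed complement `Z` of `span {v}`. It is
continuous because its kernel is closed. -/
lemma exists_functional_of_closed_complement
    {X : Type*} [NormedAddCommGroup X] [NormedSpace ℝ X] {v : X} (hv : v ≠ 0)
    {Z : Submodule ℝ X} (hZ : IsClosed (Z : Set X))
    (h₁ : Z ⊓ Submodule.span ℝ {v} = ⊥) (h₂ : Z ⊔ Submodule.span ℝ {v} = ⊤) :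
    ∃ φ : X →L[ℝ] ℝ, φ v = 1 ∧ ∀ x, φ x = 0 ↔ x ∈ Z := by
  have hc : IsCompl (LinearMap.range (LinearMap.toSpanSingleton ℝ X v)) Z := by
    rw [LinearMap.range_toSpanSingleton]
    exact (isCompl_iff.mpr ⟨disjoint_iff.mpr h₁, codisjoint_iff.mpr h₂⟩).symm
  have hinj : Function.Injective (LinearMap.toSpanSingleton ℝ X v) := by
    intro a b hab
    exact smul_left_injective ℝ hv (by simpa using hab)
  let l : X →ₗ[ℝ] ℝ := LinearMap.linearProjOfIsCompl Z _ hinj hc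
  have hker : LinearMap.ker l = Z := LinearMap.ker_linearProjOfIsCompl _ _ hinj hc
  have hl : Continuous l := l.continuous_of_isClosed_ker (by rw [hker]; exact hZ)
  refine ⟨⟨l, hl⟩, ?_, fun x => ?_⟩
  · have := LinearMap.linearProjOfIsCompl_apply_left (q := Z) _ hinj hc (1 : ℝ)
    simpa [l] using this
  · change l x = 0 ↔ x ∈ Z
    rw [← LinearMap.mem_ker, hker]

/-- If `A` has kernel `ℝ v` and range of codimension one, then bordering it with a functional `φ`,
`φ v = 1`, and with a vector `b` outside the range gives a bijection `ℝ × X → ℝ × Y`. -/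
lemma bordered_bijective
    {X Y : Type*} [AddCommGroup X] [Module ℝ X] [AddCommGroup Y] [Module ℝ Y]
    (A : X →ₗ[ℝ] Y) (φ : X →ₗ[ℝ] ℝ) (b : Y) (v : X) (hφ : φ v = 1)
    (hker : ∀ w, A w = 0 ↔ ∃ c : ℝ, w = c • v)
    (hcodim : ∃ y0 : Y, y0 ∉ Set.range A ∧
      ∀ y : Y, ∃ c : ℝ, ∃ w ∈ Set.range A, y = w + c • y0)
    (hb : b ∉ Set.range A) :
    Function.Injective (fun p : ℝ × X => (φ p.2, p.1 • b + A p.2)) ∧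
      Function.Surjective (fun p : ℝ × X => (φ p.2, p.1 • b + A p.2)) := by
  have hAv : A v = 0 := (hker v).2 ⟨1, by simp⟩
  constructor
  · rintro ⟨t, x⟩ ⟨t', x'⟩ h
    simp only [Prod.mk.injEq] at h
    obtain ⟨h1, h2⟩ := h
    have h3 : (t - t') • b = A (x' - x) := by
      rw [map_sub, sub_smul, sub_eq_sub_iff_add_eq_add, h2, add_comm]
    have ht : t - t' = 0 := by
      by_contra hne
      exact hb ⟨(t - t')⁻¹ • (x' - x), by rw [map_smul, ← h3, inv_smul_smul₀ hne]⟩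
    rw [ht, zero_smul] at h3
    obtain ⟨c, hc⟩ := (hker _).1 h3.symm
    have hc0 : c = 0 := by
      have := congrArg φ hc
      simpa [hφ, h1] using this.symm
    rw [hc0, zero_smul, sub_eq_zero] at hc
    rw [sub_eq_zero.mp ht, hc]
  · rintro ⟨s, y⟩
    obtain ⟨y0, -, hy0⟩ := hcodim
    obtain ⟨c, _, ⟨u, rfl⟩, hu⟩ := hy0 b
    obtain ⟨d, _, ⟨w, rfl⟩, hw⟩ := hy0 y
    have hc : c ≠ 0 := by
      rintro rfl
      exact hb ⟨u, by simp [hu]⟩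
    -- eliminating `y0` from `hu`, `hw` gives `y = (d / c) • b + A x`
    set x := w - (d / c) • u
    refine ⟨(d / c, x + (s - φ x) • v), ?_⟩
    have h1 : φ (x + (s - φ x) • v) = s := by simp [hφ]
    have h2 : (d / c) • b + A (x + (s - φ x) • v) = y := by
      rw [map_add, map_smul, hAv, hu, hw]
      simp only [x, map_sub, map_smul, smul_add, smul_smul, div_mul_cancel₀ d hc, smul_zero]
      abel
    simp only [h1, h2]

/-- Crandall–Rabinowitz bifurcation theorem.  `F` is a `C¹` map from an open
neighbourhood `V` of `(lam0, x0)` in `ℝ × X` into `Y`; the kernel of the partial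
derivative `D₂F` at `(lam0, x0)` is spanned by `v0 ≠ 0`, its range is closed of
codimension one, and `D₁F (lam0, x0) 1` does not lie in that range.  Given a closed
complement `Z` of `span {v0}` in `X`, the solutions of `F (λ, x) = F (lam0, x0)` near
`(lam0, x0)` form a `C¹` curve `s ↦ (lam0 + τ s, x0 + s • v0 + z s)` with
`τ 0 = τ' 0 = 0`, `z 0 = z' 0 = 0` and `z s ∈ Z`. -/
theorem crandall_rabinowitz
    {X Y : Type*} [NormedAddCommGroup X] [NormedSpace ℝ X] [CompleteSpace X]
    [NormedAddCommGroup Y] [NormedSpace ℝ Y] [CompleteSpace Y]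
    (F : ℝ × X → Y) (lam0 : ℝ) (x0 : X)
    (V : Set (ℝ × X)) (hV : IsOpen V) (hmemV : (lam0, x0) ∈ V)
    (hF : ContDiffOn ℝ 1 F V)
    (v0 : X) (hv0 : v0 ≠ 0)
    (hker : ∀ v : X, fderiv ℝ (fun x => F (lam0, x)) x0 v = 0 ↔ ∃ c : ℝ, v = c • v0)
    (hclosed : IsClosed (Set.range (fderiv ℝ (fun x => F (lam0, x)) x0)))
    (hcodim : ∃ y0 : Y, y0 ∉ Set.range (fderiv ℝ (fun x => F (lam0, x)) x0) ∧
      ∀ y : Y, ∃ c : ℝ, ∃ w ∈ Set.range (fderiv ℝ (fun x => F (lam0, x)) x0),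
        y = w + c • y0)
    (htrans : fderiv ℝ (fun l => F (l, x0)) lam0 1 ∉
      Set.range (fderiv ℝ (fun x => F (lam0, x)) x0))
    (Z : Submodule ℝ X) (hZclosed : IsClosed (Z : Set X))
    (hZcompl₁ : Z ⊓ Submodule.span ℝ {v0} = ⊥)
    (hZcompl₂ : Z ⊔ Submodule.span ℝ {v0} = ⊤) :
    ∃ ε : ℝ, 0 < ε ∧ ∃ U ∈ nhds (lam0, x0), ∃ τ : ℝ → ℝ, ∃ z : ℝ → X,
      ContDiffOn ℝ 1 τ (Ioo (-ε) ε) ∧ ContDiffOn ℝ 1 z (Ioo (-ε) ε) ∧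
      (∀ s, z s ∈ Z) ∧
      τ 0 = 0 ∧ deriv τ 0 = 0 ∧ z 0 = 0 ∧ deriv z 0 = 0 ∧
      {p ∈ U | F p = F (lam0, x0)} =
        (fun s => (lam0 + τ s, x0 + s • v0 + z s)) '' Ioo (-ε) ε := by
  obtain ⟨φ, hφv, hφZ⟩ :=
    exists_functional_of_closed_complement hv0 hZclosed hZcompl₁ hZcompl₂
  have hFc : ContDiffAt ℝ 1 F (lam0, x0) := hF.contDiffAt (hV.mem_nhds hmemV)
  have hFd := (hFc.differentiableAt one_ne_zero).hasFDerivAt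
  set f' := fderiv ℝ F (lam0, x0)
  have hA : fderiv ℝ (fun x => F (lam0, x)) x0 = f'.comp (ContinuousLinearMap.inr ℝ ℝ X) :=
    (hFd.comp x0 (hasFDerivAt_prodMk_right lam0 x0)).fderiv
  have hB : fderiv ℝ (fun l => F (l, x0)) lam0 = f'.comp (ContinuousLinearMap.inl ℝ ℝ X) :=
    (hFd.comp lam0 (hasFDerivAt_prodMk_left lam0 x0)).fderiv
  rw [hA] at hker hcodim htrans
  rw [hB] at htrans
  let Φ : ℝ × X → ℝ × Y := fun p => (φ (p.2 - x0), F p)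
  let Φ' : ℝ × X →L[ℝ] ℝ × Y := (φ.comp (ContinuousLinearMap.snd ℝ ℝ X)).prod f'
  have hΦc : ContDiffAt ℝ 1 Φ (lam0, x0) := by
    refine ContDiffAt.prodMk ?_ hFc
    exact (φ.contDiff.comp (contDiff_snd.sub contDiff_const)).contDiffAt
  have hΦd : HasFDerivAt Φ Φ' (lam0, x0) :=
    (φ.hasFDerivAt.comp (lam0, x0) (hasFDerivAt_snd.sub_const x0)).prodMk hFd
  have hΦ'eq : (Φ' : ℝ × X → ℝ × Y) = fun p => (φ p.2, p.1 • f' (1, 0) + f' (0, p.2)) := by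
    funext ⟨t, v⟩
    have : f' (t, v) = t • f' (1, 0) + f' (0, v) := by
      rw [← map_smul, ← map_add]; simp
    simp [Φ', this]
  obtain ⟨hinj, hsurj⟩ := bordered_bijective
    (f'.comp (ContinuousLinearMap.inr ℝ ℝ X)).toLinearMap φ.toLinearMap (f' (1, 0)) v0 hφv
    hker hcodim (by simpa using htrans)
  have hΦinj : Function.Injective Φ' := by rw [hΦ'eq]; exact hinj
  have hΦsurj : Function.Surjective Φ' := by rw [hΦ'eq]; exact hsurj
  let L : (ℝ × X) ≃L[ℝ] ℝ × Y := ContinuousLinearEquiv.ofBijective Φ'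
    (LinearMap.ker_eq_bot.mpr hΦinj) (LinearMap.range_eq_top.mpr hΦsurj)
  have hL : HasFDerivAt Φ (L : (ℝ × X) →L[ℝ] ℝ × Y) (lam0, x0) := by
    rw [ContinuousLinearEquiv.coe_ofBijective]; exact hΦd
  have hLv : L (0, v0) = (1, 0) := by
    change Φ' (0, v0) = (1, 0)
    have : f' (0, v0) = 0 := (hker v0).2 ⟨1, by simp⟩
    simp [Φ', hφv, this]
  have hLs : L.symm (1, 0) = (0, v0) := by rw [← hLv, L.symm_apply_apply]
  let e := hΦc.toOpenPartialHomeomorph Φ hL one_ne_zero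
  have he : ∀ p, e p = Φ p := fun p => rfl
  set y1 := F (lam0, x0)
  have hΦ0 : Φ (lam0, x0) = (0, y1) := by simp [Φ, y1]
  have hsrc : (lam0, x0) ∈ e.source :=
    hΦc.mem_toOpenPartialHomeomorph_source hL one_ne_zero
  have htgt : (0, y1) ∈ e.target := hΦ0 ▸ e.map_source hsrc
  have hg0 : e.symm (0, y1) = (lam0, x0) := by
    rw [← hΦ0, ← he, e.left_inv hsrc]
  have hgc : ContDiffAt ℝ 1 e.symm (0, y1) := by
    rw [← hΦ0]; exact hΦc.to_localInverse hL one_ne_zero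
  have hgd : HasFDerivAt e.symm (L.symm : (ℝ × Y) →L[ℝ] ℝ × X) (0, y1) :=
    e.hasFDerivAt_symm htgt (by rw [hg0]; exact hL)
  have hline : Continuous fun s : ℝ => (s, y1) := by fun_prop
  have hev : ∀ᶠ s in nhds (0 : ℝ), (s, y1) ∈ e.target ∧ ContDiffAt ℝ 1 e.symm (s, y1) :=
    hline.continuousAt.eventually
      ((e.open_target.eventually_mem htgt).and (hgc.eventually (by simp)))
  obtain ⟨ε, hε, hball⟩ := Metric.eventually_nhds_iff.mp hev
  have hIoo : ∀ s ∈ Ioo (-ε) ε, (s, y1) ∈ e.target ∧ ContDiffAt ℝ 1 e.symm (s, y1) := by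
    intro s hs
    exact hball (by rw [Real.dist_0_eq_abs]; exact abs_lt.mpr hs)
  let γ : ℝ → ℝ × X := fun s => e.symm (s, y1)
  have hγc : ContDiffOn ℝ 1 γ (Ioo (-ε) ε) := fun s hs =>
    ((hIoo s hs).2.comp s (by fun_prop)).contDiffWithinAt
  have hγ0 : γ 0 = (lam0, x0) := hg0
  have hγd : HasDerivAt γ (0, v0) 0 := by
    have h := hgd.comp_hasDerivAt (0 : ℝ)
      ((hasDerivAt_id (0 : ℝ)).prodMk (hasDerivAt_const (0 : ℝ) y1))
    rw [← hLs]
    exact h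
  have hγ1 : HasDerivAt (fun s => (γ s).1) 0 0 :=
    (ContinuousLinearMap.fst ℝ ℝ X).hasFDerivAt.comp_hasDerivAt (0 : ℝ) hγd
  have hγ2 : HasDerivAt (fun s => (γ s).2) v0 0 :=
    (ContinuousLinearMap.snd ℝ ℝ X).hasFDerivAt.comp_hasDerivAt (0 : ℝ) hγd
  have hγΦ : ∀ s ∈ Ioo (-ε) ε, Φ (γ s) = (s, y1) := fun s hs => e.right_inv (hIoo s hs).1
  let P : X →L[ℝ] X := ContinuousLinearMap.id ℝ X - φ.smulRight v0
  have hP : ∀ x, P x = x - φ x • v0 := fun x => by simp [P]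
  have hparam : ∀ s ∈ Ioo (-ε) ε,
      (lam0 + ((γ s).1 - lam0), x0 + s • v0 + P ((γ s).2 - x0)) = γ s := by
    intro s hs
    have h : φ ((γ s).2 - x0) = s := congrArg Prod.fst (hγΦ s hs)
    rw [hP, h]
    ext
    · simp
    · simp
  refine ⟨ε, hε, e.source ∩ {p | φ (p.2 - x0) ∈ Ioo (-ε) ε}, ?_, fun s => (γ s).1 - lam0,
    fun s => P ((γ s).2 - x0), ?_, ?_, ?_, ?_, ?_, ?_, ?_, ?_⟩
  · refine inter_mem (e.open_source.mem_nhds hsrc) ?_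
    have hcont : Continuous fun p : ℝ × X => φ (p.2 - x0) := by fun_prop
    exact (isOpen_Ioo.preimage hcont).mem_nhds (by simp [hε])
  · exact (contDiff_fst.comp_contDiffOn hγc).sub contDiffOn_const
  · exact P.contDiff.comp_contDiffOn ((contDiff_snd.comp_contDiffOn hγc).sub contDiffOn_const)
  · intro s
    simp [← hφZ, hP, hφv]
  · simp [hγ0]
  · exact (hγ1.sub_const lam0).deriv
  · simp [hγ0]
  · have h := (P.hasFDerivAt.comp_hasDerivAt (0 : ℝ) (hγ2.sub_const x0)).deriv
    rw [show P v0 = 0 by simp [hP, hφv]] at h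
    exact h
  · ext p
    constructor
    · rintro ⟨⟨hp, hpε⟩, hFp⟩
      have hep : e p = (φ (p.2 - x0), y1) := by rw [he, ← hFp]
      refine ⟨φ (p.2 - x0), hpε, ?_⟩
      simp only
      rw [hparam _ hpε]
      change e.symm _ = p
      rw [← hep, e.left_inv hp]
    · rintro ⟨s, hs, rfl⟩
      simp only
      rw [hparam s hs]
      have h := hγΦ s hs
      refine ⟨⟨e.map_target (hIoo s hs).1, ?_⟩, congrArg Prod.snd h⟩
      have h1 : φ ((γ s).2 - x0) = s := congrArg Prod.fst h
      simpa only [mem_ofPred_eq, h1] using hs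
end

section
/- Weighted Poincaré inequality on Euclidean space: for every n ≥ 3 there exists a constant C > 0, depending only on n, such that ∫_{ℝ^n} u(x)² (1+‖x‖²)^{-1} dx ≤ C² ∫_{ℝ^n} ‖∇u(x)‖² dx for every smooth compactly supported function u : ℝ^n → ℝ. -/
/-!
The proof integrates the divergence of `u² w x`, where `w = (1 + ‖x‖²)⁻¹`. For `g = u² w` this
divergence is `dg(x) + n g = u² w (n - 2 ‖x‖² w) + 2 u w du(x)`, and its integral vanishes by
`integral_euler_add_eq_zero`. Since `n ≥ 3` and `‖x‖² w ≤ 1`, the first term is at least `u² w`,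
while Young's inequality bounds the second one from below by `-(u² w / 2 + 2 ‖du‖²)`. Hence
`u² w ≤ 2 div (u² w x) + 4 ‖du‖²` pointwise (`weighted_sq_le`), and integrating gives the
theorem with `C = 2`.
-/

open MeasureTheory

private lemma integral_fderiv_apply_eq_zero {n : ℕ} {f : EuclideanSpace ℝ (Fin n) → ℝ}
    (hf : ContDiff ℝ 1 f) (hc : HasCompactSupport f) (v : EuclideanSpace ℝ (Fin n)) :
    ∫ x, fderiv ℝ f x v = 0 := by
  have hi : Integrable (fun x => fderiv ℝ f x v) :=
    ((hf.continuous_fderiv one_ne_zero).clm_apply continuous_const).integrable_of_hasCompactSupport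
      (hc.fderiv_apply (𝕜 := ℝ) v)
  have h := integral_mul_fderiv_eq_neg_fderiv_mul_of_integrable (μ := volume) (𝕜 := ℝ)
    (f := fun _ : EuclideanSpace ℝ (Fin n) => (1 : ℝ)) (g := f) (v := v)
    (by simp) (by simpa using hi)
    (by simpa using hf.continuous.integrable_of_hasCompactSupport hc)
    (by intro x _; fun_prop) (fun x _ => hf.differentiable one_ne_zero x)
  simpa using h

/-- The divergence theorem for the compactly supported vector field `x ↦ g x • x`, whose
divergence is `dg(x) + n g`. -/
private lemma integral_euler_add_eq_zero {n : ℕ} {g : EuclideanSpace ℝ (Fin n) → ℝ}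
    (hg : ContDiff ℝ 1 g) (hc : HasCompactSupport g) :
    Integrable (fun x => fderiv ℝ g x x + n * g x) ∧
      ∫ x, (fderiv ℝ g x x + n * g x) = 0 := by
  let f : Fin n → EuclideanSpace ℝ (Fin n) → ℝ := fun i x => g x * x i
  have hf (i) : ContDiff ℝ 1 (f i) := by
    have : ContDiff ℝ 1 (fun x : EuclideanSpace ℝ (Fin n) => x i) := by fun_prop
    exact hg.mul this
  have hfc (i) : HasCompactSupport (f i) := hc.mul_right
  have hi (i) (v : EuclideanSpace ℝ (Fin n)) : Integrable (fun x => fderiv ℝ (f i) x v) :=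
    (((hf i).continuous_fderiv one_ne_zero).clm_apply
      continuous_const).integrable_of_hasCompactSupport ((hfc i).fderiv_apply (𝕜 := ℝ) v)
  have hd (i) (x v : EuclideanSpace ℝ (Fin n)) :
      fderiv ℝ (f i) x v = fderiv ℝ g x v * x i + g x * v i := by
    have h1 := (hg.differentiable one_ne_zero x).hasFDerivAt
    have h2 : HasFDerivAt (fun x : EuclideanSpace ℝ (Fin n) => x i)
      (EuclideanSpace.proj i : EuclideanSpace ℝ (Fin n) →L[ℝ] ℝ) x :=
      (EuclideanSpace.proj i : EuclideanSpace ℝ (Fin n) →L[ℝ] ℝ).hasFDerivAt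
    have h3 : HasFDerivAt (f i) _ x := h1.mul h2
    rw [h3.fderiv]
    simp
    ring
  have hs : (fun x => fderiv ℝ g x x + n * g x) =
      fun x => ∑ i, fderiv ℝ (f i) x (EuclideanSpace.basisFun (Fin n) ℝ i) := by
    ext x
    simp only [hd, Finset.sum_add_distrib]
    congr 1
    · conv_lhs => rw [← (EuclideanSpace.basisFun (Fin n) ℝ).sum_repr x]
      simp only [map_sum, map_smul, smul_eq_mul]
      rw [(EuclideanSpace.basisFun (Fin n) ℝ).sum_repr x]
      exact Finset.sum_congr rfl fun i _ => by simp [mul_comm]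
    · simp
  rw [hs]
  refine ⟨integrable_finsetSum _ fun i _ => hi i _, ?_⟩
  rw [integral_finsetSum _ fun i _ => hi i _]
  exact Finset.sum_eq_zero fun i _ => integral_fderiv_apply_eq_zero (hf i) (hfc i) _

/-- Here `a`, `b`, `r`, `N` stand for `u x`, `‖fderiv ℝ u x‖`, `‖x‖` and the dimension, `d` for
`fderiv ℝ u x x` and `w` for the weight; the bracket is the divergence of `u² w x`. -/
private lemma weighted_sq_le {a b d r w N : ℝ} (hN : 3 ≤ N) (hw : 0 ≤ w)
    (hrw : (1 + r ^ 2) * w = 1) (hd : |d| ≤ b * r) :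
    a ^ 2 * w ≤ 2 * (2 * a * d * w - 2 * a ^ 2 * r ^ 2 * w ^ 2 + N * (a ^ 2 * w))
      + 4 * b ^ 2 := by
  have hr : r ^ 2 * w = 1 - w := by linarith
  have hd2 : d ^ 2 ≤ b ^ 2 * r ^ 2 := by
    rw [← mul_pow]; exact sq_le_sq.2 (hd.trans (le_abs_self _))
  -- Uses `d² ≤ b² r²` and `r² w ≤ 1`.
  have h1 : d ^ 2 * w ≤ b ^ 2 := by
    have := mul_le_mul_of_nonneg_right hd2 hw
    nlinarith [mul_nonneg (sq_nonneg b) hw]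
  have h2 : a ^ 2 * r ^ 2 * w ^ 2 = a ^ 2 * w * (1 - w) := by rw [← hr]; ring
  -- Young's inequality for the cross term `2 a d w`.
  have h3 : 0 ≤ (a + 2 * d) ^ 2 * w := by positivity
  have h4 : 0 ≤ a ^ 2 * w := by positivity
  have h5 : 0 ≤ a ^ 2 * w * w := by positivity
  nlinarith [mul_nonneg (sub_nonneg.2 hN) h4]

/-- Bartnik's weighted Poincaré inequality on Euclidean space:
for every `n ≥ 3` there is a constant `C > 0` depending only on `n` such that
`∫ u² (1+‖x‖²)⁻¹ ≤ C² ∫ ‖∇u‖²` for every smooth compactly supported `u : ℝⁿ → ℝ`. -/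
theorem weighted_poincare_euclidean (n : ℕ) (hn : 3 ≤ n) :
    ∃ C : ℝ, 0 < C ∧
      ∀ u : EuclideanSpace ℝ (Fin n) → ℝ, ContDiff ℝ (⊤ : ℕ∞) u → HasCompactSupport u →
        ∫ x : EuclideanSpace ℝ (Fin n), (u x) ^ 2 * (1 + ‖x‖ ^ 2)⁻¹ ≤
          C ^ 2 * ∫ x : EuclideanSpace ℝ (Fin n), ‖fderiv ℝ u x‖ ^ 2 := by
  refine ⟨2, two_pos, fun u hu hc => ?_⟩
  have hu1 : ContDiff ℝ 1 u := hu.of_le (by exact_mod_cast le_top)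
  have hpos (x : EuclideanSpace ℝ (Fin n)) : 0 < 1 + ‖x‖ ^ 2 := by positivity
  let g : EuclideanSpace ℝ (Fin n) → ℝ := fun x => u x ^ 2 * (1 + ‖x‖ ^ 2)⁻¹
  have hg : ContDiff ℝ 1 g :=
    (hu1.pow 2).mul ((contDiff_const.add (contDiff_norm_sq ℝ)).inv fun x => (hpos x).ne')
  have hgc : HasCompactSupport g := by
    refine HasCompactSupport.mul_right (f := fun x => u x ^ 2) ?_
    exact hc.comp_left (g := fun t : ℝ => t ^ 2) (by simp)
  have hgi : Integrable g := hg.continuous.integrable_of_hasCompactSupport hgc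
  obtain ⟨hFi, hF⟩ := integral_euler_add_eq_zero hg hgc
  have hbi : Integrable (fun x => ‖fderiv ℝ u x‖ ^ 2) := by
    refine Continuous.integrable_of_hasCompactSupport
      ((hu1.continuous_fderiv one_ne_zero).norm.pow 2) ?_
    exact (hc.fderiv (𝕜 := ℝ)).comp_left (g := fun L => ‖L‖ ^ 2) (by simp)
  have hgd (x : EuclideanSpace ℝ (Fin n)) : fderiv ℝ g x x =
      2 * u x * fderiv ℝ u x x * (1 + ‖x‖ ^ 2)⁻¹
        - 2 * u x ^ 2 * ‖x‖ ^ 2 * ((1 + ‖x‖ ^ 2)⁻¹) ^ 2 := by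
    have h1 := ((hu1.differentiable one_ne_zero x).hasFDerivAt).pow 2
    have h2 := ((hasStrictFDerivAt_norm_sq x).hasFDerivAt).const_add 1
    have h3 := (hasDerivAt_inv (hpos x).ne').comp_hasFDerivAt x h2
    have h4 : HasFDerivAt g _ x := h1.mul h3
    rw [h4.fderiv]
    simp
    ring
  have hle : ∀ x, g x ≤ 2 * (fderiv ℝ g x x + n * g x) + 4 * ‖fderiv ℝ u x‖ ^ 2 := by
    intro x
    rw [hgd]
    exact weighted_sq_le (by exact_mod_cast hn) (inv_pos.2 (hpos x)).le
      (mul_inv_cancel₀ (hpos x).ne') ((fderiv ℝ u x).le_opNorm x)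
  calc ∫ x, g x ≤ ∫ x, (2 * (fderiv ℝ g x x + n * g x) + 4 * ‖fderiv ℝ u x‖ ^ 2) :=
        integral_mono hgi ((hFi.const_mul 2).add (hbi.const_mul 4)) hle
    _ = 2 ^ 2 * ∫ x, ‖fderiv ℝ u x‖ ^ 2 := by
        rw [integral_add (hFi.const_mul 2) (hbi.const_mul 4), integral_const_mul,
          integral_const_mul, hF]
        norm_num
end

section
/- Weighted Sobolev embedding H_{s,δ} ⊂ C^{s'}_{δ'} on Euclidean space: let n ≥ 1, let s ≥ s' ≥ 0 be integers and δ, δ' real numbers with s' < s − n/2 and δ' < δ + n/2. Then there is a constant C > 0, depending only on n, s, δ, s', δ', such that every C^s function u : ℝ^n → ℝ with finite H_{s,δ}-norm satisfies, for every integer 0 ≤ m ≤ s' and every x ∈ ℝ^n, (1+‖x‖²)^{(δ'+m)/2} ‖D^m u(x)‖ ≤ C ‖u‖_{H_{s,δ}}. -/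
/-!
The embedding follows from a local Sobolev inequality on balls whose radius grows linearly with
`‖x‖`.

Let `k = s - s' > n / 2`. Taylor's formula expanded at `x + z` and evaluated at `x` gives, in norm
(`norm_iteratedFDeriv_le_taylor`),
`‖Dᵐu(x)‖ ≤ ∑_{j<k} ‖z‖ʲ ‖Dᵐ⁺ʲu(x+z)‖ + ‖z‖ᵏ ∫₀¹ tᵏ⁻¹ ‖Dᵐ⁺ᵏu(x+tz)‖ dt`.
This is squared and integrated over `z` in the ball of radius `r`. The remainder is handled by
Cauchy–Schwarz in `t` with weight `t^(-1/2)`, Tonelli, and the change of variables `y = x + tz`,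
which produces the factor `t^(-n)`; the integral in `t` converges because `2k > n`
(`lintegral_sq_remainder_le`). The result is `local_sobolev`:
`rⁿ ‖Dᵐu(x)‖² ≤ C ∑_{j≤k} r²ʲ ∫_{B(x,r)} ‖Dᵐ⁺ʲu‖²`, with `C` independent of `r`, `x` and `u`.

With `r = √(1+‖x‖²) / 2` the weight `1 + ‖y‖²` is comparable to `1 + ‖x‖²` on `B(x,r)`. Multiplying
by `(1+‖x‖²)^(m+δ)` therefore turns the right-hand side into a multiple of the squared weighted norm
(`lintegral_ball_le_HNorm`), and the left-hand side into
`(1+‖x‖²)^(m+δ+n/2) ‖Dᵐu(x)‖²`, up to a constant.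
-/

open MeasureTheory

/-- `u` has finite weighted Sobolev `H_{s,δ}`-norm on `ℝⁿ`: for every `m ≤ s` the
weighted integral of `‖Dᵐu‖²` with weight `(1+‖x‖²)^(m+δ)` is finite. -/
def FiniteHNorm (n : ℕ) {F : Type*} [NormedAddCommGroup F] [NormedSpace ℝ F]
    (s : ℕ) (δ : ℝ) (u : EuclideanSpace ℝ (Fin n) → F) : Prop :=
  ∀ m ≤ s, Integrable (fun x : EuclideanSpace ℝ (Fin n) =>
    ‖iteratedFDeriv ℝ m u x‖ ^ 2 * (1 + ‖x‖ ^ 2) ^ ((m : ℝ) + δ))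

/-- The weighted Sobolev `H_{s,δ}`-norm of `u` on `ℝⁿ` (its square is the sum of the
weighted `L²`-norms of the derivatives of order `≤ s`). -/
noncomputable def HNorm (n : ℕ) {F : Type*} [NormedAddCommGroup F] [NormedSpace ℝ F]
    (s : ℕ) (δ : ℝ) (u : EuclideanSpace ℝ (Fin n) → F) : ℝ :=
  Real.sqrt (∑ m ∈ Finset.range (s + 1),
    ∫ x : EuclideanSpace ℝ (Fin n),
      ‖iteratedFDeriv ℝ m u x‖ ^ 2 * (1 + ‖x‖ ^ 2) ^ ((m : ℝ) + δ))

open scoped ENNReal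

/-! ### Dilations and Taylor's formula in norm -/

theorem lintegral_rpow_neg_half :
    ∫⁻ t in Set.Ioc (0 : ℝ) 1, ENNReal.ofReal (t ^ (-(1 / 2) : ℝ)) = 2 := by
  have hint : IntegrableOn (fun t : ℝ => t ^ (-(1 / 2) : ℝ)) (Set.Ioc 0 1) :=
    (intervalIntegrable_iff_integrableOn_Ioc_of_le zero_le_one).1
      (intervalIntegral.intervalIntegrable_rpow' (by norm_num))
  rw [← ofReal_integral_eq_lintegral_ofReal hint, ← intervalIntegral.integral_of_le zero_le_one,
    integral_rpow (Or.inl (by norm_num))]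
  · norm_num
  · filter_upwards [ae_restrict_mem measurableSet_Ioc] with t ht
    exact Real.rpow_nonneg ht.1.le _

/-- The dilation `z ↦ x + t • z` with `t ≤ 1` maps the ball of radius `r` about `0` into the ball
of radius `r` about `x`, and has Jacobian `t ^ n`. -/
theorem lintegral_comp_dilation_le {n : ℕ} {f : EuclideanSpace ℝ (Fin n) → ℝ≥0∞}
    (hf : Measurable f) (x : EuclideanSpace ℝ (Fin n)) (r : ℝ) {t : ℝ} (ht : 0 < t) (ht1 : t ≤ 1) :
    ∫⁻ z in Metric.ball 0 r, f (x + t • z) ≤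
      ENNReal.ofReal ((t ^ n)⁻¹) * ∫⁻ y in Metric.ball x r, f y := by
  set g := (Metric.ball x r).indicator f with hg
  have hgm : Measurable g := hf.indicator measurableSet_ball
  calc ∫⁻ z in Metric.ball 0 r, f (x + t • z)
      ≤ ∫⁻ z in Metric.ball 0 r, g (x + t • z) := by
        refine setLIntegral_mono (by fun_prop) fun z hz => ?_
        have : x + t • z ∈ Metric.ball x r := by
          rw [mem_ball_iff_norm] at hz ⊢
          simp only [sub_zero, add_sub_cancel_left, norm_smul, Real.norm_eq_abs,
            abs_of_pos ht] at hz ⊢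
          nlinarith [norm_nonneg z]
        simp [hg, Set.indicator_of_mem this]
    _ ≤ ∫⁻ z, g (x + t • z) := setLIntegral_le_lintegral _ _
    _ = ∫⁻ w, g (x + w) ∂(Measure.map (fun z : EuclideanSpace ℝ (Fin n) => t • z) volume) := by
        rw [lintegral_map (by fun_prop) (by fun_prop)]
    _ = ENNReal.ofReal ((t ^ n)⁻¹) * ∫⁻ y in Metric.ball x r, f y := by
        rw [Measure.map_addHaar_smul volume ht.ne', lintegral_smul_measure,
          lintegral_add_left_eq_self g x, lintegral_indicator measurableSet_ball]
        simp [abs_of_pos ht]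

/-- The induction step of the norm form of Taylor's formula: integrating the mean value bound `h`
against `t ^ l`, an integration by parts turns `∫ t ^ l ∫_t^1 ψ` into
`(l + 1)⁻¹ ∫ t ^ (l + 1) ψ`. -/
theorem integral_pow_mul_le {φ ψ : ℝ → ℝ} (hφ : Continuous φ) (hψ : Continuous ψ)
    (hφ0 : ∀ t, 0 ≤ φ t) (hψ0 : ∀ t, 0 ≤ ψ t) {c : ℝ} (hc : 0 ≤ c)
    (h : ∀ t ∈ Set.Icc (0 : ℝ) 1, φ t ≤ φ 1 + c * ∫ τ in t..1, ψ τ) (l : ℕ) :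
    ∫ t in (0 : ℝ)..1, t ^ l * φ t ≤ φ 1 + c * ∫ t in (0 : ℝ)..1, t ^ (l + 1) * ψ t := by
  set Φ : ℝ → ℝ := fun t => ∫ τ in t..1, ψ τ with hΦ
  have hder : ∀ t, HasDerivAt Φ (-ψ t) t := fun t =>
    intervalIntegral.integral_hasDerivAt_left (hψ.intervalIntegrable _ _)
      (hψ.stronglyMeasurableAtFilter _ _) hψ.continuousAt
  have hΦc : Continuous Φ := continuous_iff_continuousAt.2 fun t => (hder t).continuousAt
  have hΦ1 : Φ 1 = 0 := by simp [hΦ]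
  have hparts : (l + 1 : ℝ) * ∫ t in (0 : ℝ)..1, t ^ l * Φ t =
      ∫ t in (0 : ℝ)..1, t ^ (l + 1) * ψ t := by
    have h1 : ∀ t ∈ Set.uIcc (0 : ℝ) 1, HasDerivAt (fun t : ℝ => t ^ (l + 1) * Φ t)
        ((l + 1) * (t ^ l * Φ t) - t ^ (l + 1) * ψ t) t := fun t _ => by
      convert! (hasDerivAt_pow (l + 1) t).mul (hder t) using 1
      push_cast [Nat.add_sub_cancel]
      ring
    have h2 := intervalIntegral.integral_eq_sub_of_hasDerivAt h1
      (Continuous.intervalIntegrable (by fun_prop) _ _)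
    rw [intervalIntegral.integral_sub (Continuous.intervalIntegrable (by fun_prop) _ _)
      (Continuous.intervalIntegrable (by fun_prop) _ _),
      intervalIntegral.integral_const_mul, hΦ1] at h2
    simp at h2
    linarith
  have hΦint0 : 0 ≤ ∫ t in (0 : ℝ)..1, t ^ l * Φ t :=
    intervalIntegral.integral_nonneg zero_le_one fun t ht =>
      mul_nonneg (pow_nonneg ht.1 _)
        (intervalIntegral.integral_nonneg ht.2 fun τ _ => hψ0 τ)
  have hle : ∫ t in (0 : ℝ)..1, t ^ l * Φ t ≤ ∫ t in (0 : ℝ)..1, t ^ (l + 1) * ψ t := by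
    rw [← hparts]
    have : (0 : ℝ) ≤ l := Nat.cast_nonneg l
    nlinarith
  calc ∫ t in (0 : ℝ)..1, t ^ l * φ t
      ≤ ∫ t in (0 : ℝ)..1, (φ 1 + c * (t ^ l * Φ t)) := by
        refine intervalIntegral.integral_mono_on zero_le_one
          (Continuous.intervalIntegrable (by fun_prop) _ _)
          (Continuous.intervalIntegrable (by fun_prop) _ _) fun t ht => ?_
        have h1 := h t ht
        have h2 : t ^ l ≤ 1 := pow_le_one₀ ht.1 ht.2
        have h3 : 0 ≤ t ^ l := pow_nonneg ht.1 _
        have h4 := mul_le_mul_of_nonneg_left h1 h3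
        have h5 := mul_le_mul_of_nonneg_right h2 (hφ0 1)
        simp only [hΦ]
        linarith
    _ = φ 1 + c * ∫ t in (0 : ℝ)..1, t ^ l * Φ t := by
        rw [intervalIntegral.integral_add (Continuous.intervalIntegrable (by fun_prop) _ _)
          (Continuous.intervalIntegrable (by fun_prop) _ _), intervalIntegral.integral_const_mul]
        simp
    _ ≤ _ := by gcongr

/-- The fundamental theorem of calculus along the segment from `x + t • z` to `x + z`, in norm.
The factor `(1 : ℝ) •` makes both sides values of one function of `t`, the form used in
`integral_pow_mul_le`. -/
theorem norm_iteratedFDeriv_le_add_integral {E F : Type*} [NormedAddCommGroup E] [NormedSpace ℝ E]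
    [NormedAddCommGroup F] [NormedSpace ℝ F] [CompleteSpace F] {s i : ℕ} {u : E → F}
    (hu : ContDiff ℝ s u) (hi : i < s) (x z : E) {t : ℝ} (ht : t ≤ 1) :
    ‖iteratedFDeriv ℝ i u (x + t • z)‖ ≤ ‖iteratedFDeriv ℝ i u (x + (1 : ℝ) • z)‖ +
      ‖z‖ * ∫ τ in t..1, ‖iteratedFDeriv ℝ (i + 1) u (x + τ • z)‖ := by
  have hd : Differentiable ℝ (iteratedFDeriv ℝ i u) :=
    hu.differentiable_iteratedFDeriv (by exact_mod_cast hi)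
  have hc : Continuous (iteratedFDeriv ℝ (i + 1) u) :=
    hu.continuous_iteratedFDeriv (by exact_mod_cast hi)
  have hcf : Continuous (fderiv ℝ (iteratedFDeriv ℝ i u)) := by
    rw [fderiv_iteratedFDeriv]
    exact (LinearIsometryEquiv.continuous _).comp hc
  have h1 : ∀ τ ∈ Set.uIcc t 1, HasDerivAt (fun τ : ℝ => iteratedFDeriv ℝ i u (x + τ • z))
      (fderiv ℝ (iteratedFDeriv ℝ i u) (x + τ • z) z) τ := fun τ _ => by
    have h2 : HasDerivAt (fun τ : ℝ => x + τ • z) z τ := by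
      simpa using ((hasDerivAt_id τ).smul_const z).const_add x
    exact (hd _).hasFDerivAt.comp_hasDerivAt τ h2
  have h3 := intervalIntegral.integral_eq_sub_of_hasDerivAt h1
    (Continuous.intervalIntegrable (by fun_prop) _ _)
  have h4 : ‖∫ τ in t..1, fderiv ℝ (iteratedFDeriv ℝ i u) (x + τ • z) z‖ ≤
      ∫ τ in t..1, ‖z‖ * ‖iteratedFDeriv ℝ (i + 1) u (x + τ • z)‖ := by
    refine intervalIntegral.norm_integral_le_of_norm_le ht (ae_of_all _ fun τ _ => ?_)
      (Continuous.intervalIntegrable (by fun_prop) _ _)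
    rw [← norm_fderiv_iteratedFDeriv, mul_comm]
    exact ContinuousLinearMap.le_opNorm _ _
  rw [intervalIntegral.integral_const_mul, h3] at h4
  have h5 := norm_sub_norm_le (iteratedFDeriv ℝ i u (x + t • z))
    (iteratedFDeriv ℝ i u (x + (1 : ℝ) • z))
  rw [norm_sub_rev] at h5
  linarith

/-- Taylor's formula for `Dᵐu`, expanded at `x + z` and evaluated at `x`, in norm. Factorials are
dropped. -/
theorem norm_iteratedFDeriv_le_taylor {E F : Type*} [NormedAddCommGroup E] [NormedSpace ℝ E]
    [NormedAddCommGroup F] [NormedSpace ℝ F] [CompleteSpace F] {s m : ℕ} {u : E → F}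
    (hu : ContDiff ℝ s u) (x z : E) (l : ℕ) (hl : m + l + 1 ≤ s) :
    ‖iteratedFDeriv ℝ m u x‖ ≤
      ∑ j ∈ Finset.range (l + 1), ‖z‖ ^ j * ‖iteratedFDeriv ℝ (m + j) u (x + z)‖ +
      ‖z‖ ^ (l + 1) * ∫ t in (0 : ℝ)..1, t ^ l * ‖iteratedFDeriv ℝ (m + l + 1) u (x + t • z)‖ := by
  have hc : ∀ i ≤ s, Continuous (fun t : ℝ => ‖iteratedFDeriv ℝ i u (x + t • z)‖) := fun i hi => by
    have : Continuous (iteratedFDeriv ℝ i u) :=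
      hu.continuous_iteratedFDeriv (by exact_mod_cast hi)
    fun_prop
  induction l with
  | zero =>
    simpa using norm_iteratedFDeriv_le_add_integral hu (i := m) (by omega) x z zero_le_one
  | succ l ih =>
    refine (ih (by omega)).trans ?_
    have h := integral_pow_mul_le (hc (m + l + 1) (by omega)) (hc (m + l + 1 + 1) (by omega))
      (fun _ => norm_nonneg _) (fun _ => norm_nonneg _) (norm_nonneg z)
      (fun t ht => norm_iteratedFDeriv_le_add_integral hu (by omega) x z ht.2) l
    have h' := mul_le_mul_of_nonneg_left h (pow_nonneg (norm_nonneg z) (l + 1))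
    rw [Finset.sum_range_succ _ (l + 1)]
    simp only [one_smul] at h'
    rw [show m + (l + 1) + 1 = m + l + 1 + 1 by ring, show m + (l + 1) = m + l + 1 by ring]
    refine (add_le_add_right h' _).trans (le_of_eq ?_)
    ring

/-! ### The local Sobolev inequality -/

/-- The Cauchy–Schwarz inequality for the splitting
`t ^ l = t ^ (-1 / 4) * t ^ (l + 1 / 4)`. -/
theorem sq_lintegral_pow_mul_le (l : ℕ) {g : ℝ → ℝ≥0∞} (hg : Measurable g) :
    (∫⁻ t in Set.Ioc (0 : ℝ) 1, ENNReal.ofReal (t ^ l) * g t) ^ 2 ≤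
      2 * ∫⁻ t in Set.Ioc (0 : ℝ) 1, ENNReal.ofReal (t ^ (2 * l + 1 / 2 : ℝ)) * g t ^ 2 := by
  set a : ℝ → ℝ≥0∞ := fun t => ENNReal.ofReal (t ^ (-(1 / 4) : ℝ)) with ha
  set b : ℝ → ℝ≥0∞ := fun t => ENNReal.ofReal (t ^ (l + 1 / 4 : ℝ)) * g t with hb
  have ham : Measurable a := by fun_prop
  have hbm : Measurable b := by fun_prop
  have h1 : ∫⁻ t in Set.Ioc (0 : ℝ) 1, ENNReal.ofReal (t ^ l) * g t =
      ∫⁻ t in Set.Ioc (0 : ℝ) 1, (a * b) t := by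
    refine setLIntegral_congr_fun measurableSet_Ioc fun t ht => ?_
    simp only [ha, hb, Pi.mul_apply]
    rw [← mul_assoc, ← ENNReal.ofReal_mul (Real.rpow_nonneg ht.1.le _), ← Real.rpow_add ht.1,
      ← Real.rpow_natCast]
    congr 3
    ring
  have ha2 : ∫⁻ t in Set.Ioc (0 : ℝ) 1, a t ^ (2 : ℝ) = 2 := by
    rw [← lintegral_rpow_neg_half]
    refine setLIntegral_congr_fun measurableSet_Ioc fun t ht => ?_
    simp only [ha]
    rw [ENNReal.ofReal_rpow_of_nonneg (Real.rpow_nonneg ht.1.le _) zero_le_two,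
      ← Real.rpow_mul ht.1.le]
    norm_num
  have hb2 : ∫⁻ t in Set.Ioc (0 : ℝ) 1, b t ^ (2 : ℝ) =
      ∫⁻ t in Set.Ioc (0 : ℝ) 1, ENNReal.ofReal (t ^ (2 * l + 1 / 2 : ℝ)) * g t ^ 2 := by
    refine setLIntegral_congr_fun measurableSet_Ioc fun t ht => ?_
    simp only [hb]
    rw [ENNReal.mul_rpow_of_nonneg _ _ zero_le_two,
      ENNReal.ofReal_rpow_of_nonneg (Real.rpow_nonneg ht.1.le _) zero_le_two,
      ← Real.rpow_mul ht.1.le, ENNReal.rpow_two]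
    congr 3
    ring
  have h2 := ENNReal.lintegral_mul_le_Lp_mul_Lq (volume.restrict (Set.Ioc (0 : ℝ) 1))
    Real.HolderConjugate.two_two ham.aemeasurable hbm.aemeasurable
  rw [← h1, ha2, hb2] at h2
  refine (pow_le_pow_left' h2 2).trans (le_of_eq ?_)
  rw [mul_pow, ← ENNReal.rpow_two, ← ENNReal.rpow_two, ← ENNReal.rpow_mul, ← ENNReal.rpow_mul]
  norm_num

/-- The Taylor remainder, as a function of the increment `z`, is square integrable over a ball.
After Cauchy–Schwarz and Tonelli the inner integral costs `t ^ (-n)` by dilation, and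
`2 * l + 1 / 2 - n ≥ -1 / 2` keeps the integral in `t` convergent. This is where the condition
`l + 1 > n / 2` is needed. -/
theorem lintegral_sq_remainder_le {n l : ℕ} (hl : n ≤ 2 * l + 1)
    {ψ : EuclideanSpace ℝ (Fin n) → ℝ≥0∞} (hψ : Measurable ψ) (x : EuclideanSpace ℝ (Fin n))
    (r : ℝ) :
    ∫⁻ z in Metric.ball 0 r,
      (∫⁻ t in Set.Ioc (0 : ℝ) 1, ENNReal.ofReal (t ^ l) * ψ (x + t • z)) ^ 2 ≤
      4 * ∫⁻ y in Metric.ball x r, ψ y ^ 2 := by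
  have hswap : ∫⁻ z in Metric.ball (0 : EuclideanSpace ℝ (Fin n)) r, ∫⁻ t in Set.Ioc (0 : ℝ) 1,
        ENNReal.ofReal (t ^ (2 * l + 1 / 2 : ℝ)) * ψ (x + t • z) ^ 2 =
      ∫⁻ t in Set.Ioc (0 : ℝ) 1, ENNReal.ofReal (t ^ (2 * l + 1 / 2 : ℝ)) *
        ∫⁻ z in Metric.ball (0 : EuclideanSpace ℝ (Fin n)) r, ψ (x + t • z) ^ 2 := by
    rw [lintegral_lintegral_swap]
    · refine lintegral_congr fun t => ?_
      rw [lintegral_const_mul _ (by fun_prop)]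
    · refine Measurable.aemeasurable ?_
      unfold Function.uncurry
      fun_prop
  calc _ ≤ ∫⁻ z in Metric.ball (0 : EuclideanSpace ℝ (Fin n)) r,
        2 * ∫⁻ t in Set.Ioc (0 : ℝ) 1,
          ENNReal.ofReal (t ^ (2 * l + 1 / 2 : ℝ)) * ψ (x + t • z) ^ 2 :=
        lintegral_mono fun z => sq_lintegral_pow_mul_le l (by fun_prop)
    _ = 2 * ∫⁻ t in Set.Ioc (0 : ℝ) 1, ENNReal.ofReal (t ^ (2 * l + 1 / 2 : ℝ)) *
        ∫⁻ z in Metric.ball (0 : EuclideanSpace ℝ (Fin n)) r, ψ (x + t • z) ^ 2 := by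
        rw [lintegral_const_mul' _ _ (by norm_num), hswap]
    _ ≤ 2 * ∫⁻ t in Set.Ioc (0 : ℝ) 1, ENNReal.ofReal (t ^ (-(1 / 2) : ℝ)) *
        ∫⁻ y in Metric.ball x r, ψ y ^ 2 := by
        gcongr 2 * ?_
        refine setLIntegral_mono (by fun_prop) fun t ht => ?_
        refine (mul_le_mul_right (lintegral_comp_dilation_le (f := fun y => ψ y ^ 2) (by fun_prop)
          x r ht.1 ht.2) _).trans ?_
        rw [← mul_assoc, ← ENNReal.ofReal_mul (Real.rpow_nonneg ht.1.le _)]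
        gcongr
        rw [← Real.rpow_natCast, ← Real.rpow_neg ht.1.le, ← Real.rpow_add ht.1]
        refine Real.rpow_le_rpow_of_exponent_ge ht.1 ht.2 ?_
        have : (n : ℝ) ≤ 2 * l + 1 := by exact_mod_cast hl
        linarith
    _ = 4 * ∫⁻ y in Metric.ball x r, ψ y ^ 2 := by
        rw [lintegral_mul_const _ (by fun_prop), lintegral_rpow_neg_half, ← mul_assoc]
        norm_num

/-- The local Sobolev inequality on a ball of radius `r`, with the exact dependence on `r`:
`r ^ n ‖Dᵐu(x)‖²` is at most a constant times the sum over `j ≤ l + 1` of `r ^ (2 j) ∫ ‖Dᵐ⁺ʲu‖²`, where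
`l + 1 > n / 2` and the constant depends only on `n` and `l`. -/
theorem local_sobolev {n s m l : ℕ} (hl : n ≤ 2 * l + 1) (hm : m + l + 1 ≤ s)
    {u : EuclideanSpace ℝ (Fin n) → ℝ} (hu : ContDiff ℝ s u) (x : EuclideanSpace ℝ (Fin n))
    {r : ℝ} (hr : 0 < r) :
    ‖iteratedFDeriv ℝ m u x‖ₑ ^ 2 *
        (ENNReal.ofReal (r ^ n) * volume (Metric.ball (0 : EuclideanSpace ℝ (Fin n)) 1)) ≤
      (l + 2 : ℕ) * ∑ j ∈ Finset.range (l + 2), ENNReal.ofReal (r ^ j) ^ 2 *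
        (4 * ∫⁻ y in Metric.ball x r, ‖iteratedFDeriv ℝ (m + j) u y‖ₑ ^ 2) := by
  have hc : ∀ i ≤ s, Continuous (iteratedFDeriv ℝ i u) := fun i hi =>
    hu.continuous_iteratedFDeriv (by exact_mod_cast hi)
  -- `G j` is the `j`-th term of Taylor's formula as a function of `z`, without its power of `‖z‖`;
  -- `j = l + 1` is the remainder.
  set G : ℕ → EuclideanSpace ℝ (Fin n) → ℝ≥0∞ := fun j z =>
    if j ≤ l then ‖iteratedFDeriv ℝ (m + j) u (x + z)‖ₑ else
      ∫⁻ t in Set.Ioc (0 : ℝ) 1,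
        ENNReal.ofReal (t ^ l) * ‖iteratedFDeriv ℝ (m + j) u (x + t • z)‖ₑ with hG
  have hψm : ∀ i ≤ s, Measurable (fun y => ‖iteratedFDeriv ℝ i u y‖ₑ) := fun i hi =>
    (hc i hi).enorm.measurable
  have hGm : ∀ j ∈ Finset.range (l + 2), Measurable (G j) := fun j hj => by
    have hj' : j < l + 2 := Finset.mem_range.1 hj
    have h1 := hψm (m + j) (by omega)
    simp only [hG]
    split_ifs with h
    · exact h1.comp (measurable_const_add x)
    · refine Measurable.lintegral_prod_right' (f := fun p : EuclideanSpace ℝ (Fin n) × ℝ =>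
        ENNReal.ofReal (p.2 ^ l) * ‖iteratedFDeriv ℝ (m + j) u (x + p.2 • p.1)‖ₑ) ?_
      have h2 : Measurable (fun p : EuclideanSpace ℝ (Fin n) × ℝ => x + p.2 • p.1) := by fun_prop
      have h3 := h1.comp h2
      exact Measurable.mul (by fun_prop) h3
  have hpt : ∀ z ∈ Metric.ball (0 : EuclideanSpace ℝ (Fin n)) r,
      ‖iteratedFDeriv ℝ m u x‖ₑ ≤ ∑ j ∈ Finset.range (l + 2), ENNReal.ofReal (r ^ j) * G j z := by
    intro z hz
    have hzr : ‖z‖ ≤ r := by simpa using (mem_ball_iff_norm.1 hz).le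
    have hint0 : 0 ≤ ∫ t in (0 : ℝ)..1, t ^ l * ‖iteratedFDeriv ℝ (m + l + 1) u (x + t • z)‖ :=
      intervalIntegral.integral_nonneg zero_le_one fun t ht =>
        mul_nonneg (pow_nonneg ht.1 _) (norm_nonneg _)
    have h1 : ‖iteratedFDeriv ℝ m u x‖ ≤
        ∑ j ∈ Finset.range (l + 1), r ^ j * ‖iteratedFDeriv ℝ (m + j) u (x + z)‖ +
        r ^ (l + 1) *
          ∫ t in (0 : ℝ)..1, t ^ l * ‖iteratedFDeriv ℝ (m + l + 1) u (x + t • z)‖ := by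
      refine (norm_iteratedFDeriv_le_taylor hu x z l hm).trans ?_
      gcongr
    rw [← ofReal_norm]
    refine (ENNReal.ofReal_le_ofReal h1).trans ?_
    rw [ENNReal.ofReal_add (Finset.sum_nonneg fun _ _ => by positivity) (by positivity),
      ENNReal.ofReal_sum_of_nonneg (fun _ _ => by positivity), Finset.sum_range_succ _ (l + 1)]
    refine add_le_add (Finset.sum_le_sum fun j hj => ?_) (le_of_eq ?_)
    · have hj' : j ≤ l := by have := Finset.mem_range.1 hj; omega
      rw [ENNReal.ofReal_mul (by positivity), ofReal_norm]
      simp [hG, hj']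
    · have hcl := hc (m + l + 1) hm
      have hii : IntervalIntegrable
          (fun t : ℝ => t ^ l * ‖iteratedFDeriv ℝ (m + l + 1) u (x + t • z)‖) volume 0 1 :=
        Continuous.intervalIntegrable (by fun_prop) _ _
      rw [ENNReal.ofReal_mul (by positivity), intervalIntegral.integral_of_le zero_le_one,
        ofReal_integral_eq_lintegral_ofReal
          ((intervalIntegrable_iff_integrableOn_Ioc_of_le zero_le_one).1 hii)]
      · simp only [hG, show ¬ (l + 1 ≤ l) by omega, if_false]
        congr 1
        refine setLIntegral_congr_fun measurableSet_Ioc fun t ht => ?_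
        rw [ENNReal.ofReal_mul (pow_nonneg ht.1.le _), ofReal_norm]
        rfl
      · filter_upwards [ae_restrict_mem measurableSet_Ioc] with t ht
        exact mul_nonneg (pow_nonneg ht.1.le _) (norm_nonneg _)
  have hGint : ∀ j ∈ Finset.range (l + 2), ∫⁻ z in Metric.ball 0 r, G j z ^ 2 ≤
      4 * ∫⁻ y in Metric.ball x r, ‖iteratedFDeriv ℝ (m + j) u y‖ₑ ^ 2 := by
    intro j hj
    have hj' : j < l + 2 := Finset.mem_range.1 hj
    have h1 := hψm (m + j) (by omega)
    by_cases h : j ≤ l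
    · have h2 := lintegral_comp_dilation_le (h1.pow_const 2) x r one_pos le_rfl
      simp only [hG, h, if_true]
      simp only [one_smul, one_pow, inv_one, ENNReal.ofReal_one, one_mul] at h2
      exact h2.trans (le_mul_of_one_le_left' (by norm_num))
    · simp only [hG, h, if_false]
      exact lintegral_sq_remainder_le hl h1 x r
  have hsq : ∀ z ∈ Metric.ball (0 : EuclideanSpace ℝ (Fin n)) r,
      ‖iteratedFDeriv ℝ m u x‖ₑ ^ 2 ≤ (l + 2 : ℕ) *
        ∑ j ∈ Finset.range (l + 2), ENNReal.ofReal (r ^ j) ^ 2 * G j z ^ 2 := by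
    intro z hz
    refine (pow_le_pow_left' (hpt z hz) 2).trans ?_
    have h1 := ENNReal.rpow_sum_le_const_mul_sum_rpow (Finset.range (l + 2))
      (fun j => ENNReal.ofReal (r ^ j) * G j z) one_le_two
    norm_num [ENNReal.rpow_two, mul_pow] at h1
    simpa using h1
  calc _ = ∫⁻ z in Metric.ball (0 : EuclideanSpace ℝ (Fin n)) r,
        ‖iteratedFDeriv ℝ m u x‖ₑ ^ 2 := by
        rw [setLIntegral_const, Measure.addHaar_ball_of_pos volume _ hr]
        simp
    _ ≤ ∫⁻ z in Metric.ball (0 : EuclideanSpace ℝ (Fin n)) r, (l + 2 : ℕ) *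
        ∑ j ∈ Finset.range (l + 2), ENNReal.ofReal (r ^ j) ^ 2 * G j z ^ 2 :=
        setLIntegral_mono' measurableSet_ball hsq
    _ = (l + 2 : ℕ) * ∑ j ∈ Finset.range (l + 2), ENNReal.ofReal (r ^ j) ^ 2 *
        ∫⁻ z in Metric.ball (0 : EuclideanSpace ℝ (Fin n)) r, G j z ^ 2 := by
        rw [lintegral_const_mul' _ _ (ENNReal.natCast_ne_top _), lintegral_finsetSum]
        · congr 1
          refine Finset.sum_congr rfl fun j hj => ?_
          rw [lintegral_const_mul _ ((hGm j hj).pow_const 2)]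
        · exact fun j hj => ((hGm j hj).pow_const 2).const_mul _
    _ ≤ _ := by
        gcongr with j hj
        exact hGint j hj

/-! ### Comparison of the weights and conclusion -/

theorem rpow_le_four_rpow_abs_mul {a w : ℝ} (ha : 0 < a) (hw : 0 < w) (haw : a ≤ 4 * w)
    (hwa : w ≤ 4 * a) (e : ℝ) : a ^ e ≤ 4 ^ |e| * w ^ e := by
  rcases le_total 0 e with he | he
  · rw [abs_of_nonneg he, ← Real.mul_rpow (by norm_num) hw.le]
    exact Real.rpow_le_rpow ha.le haw he
  · have h := Real.rpow_le_rpow_of_nonpos (by positivity) (by linarith : w / 4 ≤ a) he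
    rwa [Real.div_rpow hw.le (by norm_num), div_eq_inv_mul, ← Real.rpow_neg (by norm_num),
      ← abs_of_nonpos he] at h

/-- On the ball of radius `√(1 + ‖x‖²) / 2` about `x` the weight `1 + ‖y‖ ^ 2` is comparable to
`1 + ‖x‖ ^ 2` up to the factor `4`, so the weighted norm controls the unweighted integrals there. -/
theorem lintegral_ball_le_HNorm {n s i : ℕ} {δ : ℝ} {u : EuclideanSpace ℝ (Fin n) → ℝ}
    (hfin : FiniteHNorm n s δ u) (hi : i ≤ s) (x : EuclideanSpace ℝ (Fin n)) :
    ENNReal.ofReal ((1 + ‖x‖ ^ 2) ^ ((i : ℝ) + δ)) *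
        ∫⁻ y in Metric.ball x (Real.sqrt (1 + ‖x‖ ^ 2) / 2), ‖iteratedFDeriv ℝ i u y‖ₑ ^ 2 ≤
      ENNReal.ofReal (4 ^ (s + |δ|) * HNorm n s δ u ^ 2) := by
  set a : ℝ := 1 + ‖x‖ ^ 2 with ha
  have ha0 : 0 < a := by positivity
  set r : ℝ := Real.sqrt a / 2 with hr
  have hr2 : r ^ 2 = a / 4 := by rw [hr, div_pow, Real.sq_sqrt ha0.le]; norm_num
  set I : ℕ → ℝ := fun i => ∫ x : EuclideanSpace ℝ (Fin n),
    ‖iteratedFDeriv ℝ i u x‖ ^ 2 * (1 + ‖x‖ ^ 2) ^ ((i : ℝ) + δ) with hI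
  have hI0 : ∀ i, 0 ≤ I i := fun i => integral_nonneg fun y => by positivity
  have hIH : I i ≤ HNorm n s δ u ^ 2 := by
    rw [HNorm, Real.sq_sqrt (Finset.sum_nonneg fun i _ => hI0 i)]
    exact Finset.single_le_sum (f := I) (fun i _ => hI0 i) (Finset.mem_range.2 (by omega))
  have hw : ∀ y ∈ Metric.ball x r, a ^ ((i : ℝ) + δ) ≤
      4 ^ (s + |δ|) * (1 + ‖y‖ ^ 2) ^ ((i : ℝ) + δ) := by
    intro y hy
    rw [mem_ball_iff_norm] at hy
    have h1 : ‖x‖ ≤ ‖y‖ + r := by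
      have := norm_sub_norm_le x y
      rw [norm_sub_rev] at this
      linarith
    have h2 : ‖y‖ ≤ ‖x‖ + r := by
      have := norm_sub_norm_le y x
      linarith
    have hr0 : 0 ≤ r := by positivity
    have h3 : ‖x‖ ^ 2 ≤ 2 * ‖y‖ ^ 2 + 2 * r ^ 2 := by
      nlinarith [norm_nonneg x, norm_nonneg y, sq_nonneg (‖y‖ - r)]
    have h4 : ‖y‖ ^ 2 ≤ 2 * ‖x‖ ^ 2 + 2 * r ^ 2 := by
      nlinarith [norm_nonneg x, norm_nonneg y, sq_nonneg (‖x‖ - r)]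
    refine (rpow_le_four_rpow_abs_mul ha0 (by positivity : 0 < 1 + ‖y‖ ^ 2) (by nlinarith)
      (by nlinarith) _).trans ?_
    gcongr
    · norm_num
    · refine (abs_add_le _ _).trans ?_
      rw [Nat.abs_cast]
      gcongr
  calc _ = ∫⁻ y in Metric.ball x r,
        ENNReal.ofReal (a ^ ((i : ℝ) + δ)) * ‖iteratedFDeriv ℝ i u y‖ₑ ^ 2 :=
        (lintegral_const_mul' _ _ ENNReal.ofReal_ne_top).symm
    _ ≤ ∫⁻ y in Metric.ball x r, ENNReal.ofReal (4 ^ (s + |δ|)) * ENNReal.ofReal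
          (‖iteratedFDeriv ℝ i u y‖ ^ 2 * (1 + ‖y‖ ^ 2) ^ ((i : ℝ) + δ)) := by
        refine setLIntegral_mono' measurableSet_ball fun y hy => ?_
        rw [← ofReal_norm, ← ENNReal.ofReal_pow (norm_nonneg _),
          ← ENNReal.ofReal_mul (by positivity), ← ENNReal.ofReal_mul (by positivity)]
        refine ENNReal.ofReal_le_ofReal ?_
        have := mul_le_mul_of_nonneg_right (hw y hy) (sq_nonneg ‖iteratedFDeriv ℝ i u y‖)
        linarith
    _ ≤ ∫⁻ y, ENNReal.ofReal (4 ^ (s + |δ|)) * ENNReal.ofReal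
          (‖iteratedFDeriv ℝ i u y‖ ^ 2 * (1 + ‖y‖ ^ 2) ^ ((i : ℝ) + δ)) :=
        setLIntegral_le_lintegral _ _
    _ = ENNReal.ofReal (4 ^ (s + |δ|)) * ENNReal.ofReal (I i) := by
        rw [lintegral_const_mul' _ _ ENNReal.ofReal_ne_top,
          ofReal_integral_eq_lintegral_ofReal (hfin i hi) (ae_of_all _ fun y => by positivity)]
    _ ≤ _ := by
        rw [← ENNReal.ofReal_mul (by positivity)]
        gcongr

/-- Weighted Sobolev embedding `H_{s,δ} ⊂ C^{s'}_{δ'}` on Euclidean space: if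
`s' < s - n/2` and `δ' < δ + n/2` then there is a constant `C > 0`, depending only on
`n, s, δ, s', δ'`, such that every `C^s` function with finite `H_{s,δ}`-norm satisfies
`(1+‖x‖²)^((δ'+m)/2) ‖Dᵐu(x)‖ ≤ C ‖u‖_{H_{s,δ}}` for every `m ≤ s'` and every `x`. -/
theorem weighted_sobolev_embedding (n : ℕ) (hn : 1 ≤ n) (s s' : ℕ) (δ δ' : ℝ)
    (hss' : s' ≤ s) (hs : (s' : ℝ) < (s : ℝ) - n / 2) (hδ : δ' < δ + n / 2) :
    ∃ C : ℝ, 0 < C ∧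
      ∀ u : EuclideanSpace ℝ (Fin n) → ℝ, ContDiff ℝ s u → FiniteHNorm n s δ u →
        ∀ m ≤ s', ∀ x : EuclideanSpace ℝ (Fin n),
          (1 + ‖x‖ ^ 2) ^ ((δ' + m) / 2) * ‖iteratedFDeriv ℝ m u x‖ ≤
            C * HNorm n s δ u := by
  -- Every order `m ≤ s'` uses the same number `l + 1 = s - s' > n / 2` of extra derivatives.
  set l : ℕ := s - s' - 1 with hl
  have hlt : s' < s := by
    have : (0 : ℝ) ≤ n / 2 := by positivity
    exact_mod_cast (show (s' : ℝ) < s by linarith)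
  have hsl : s = s' + l + 1 := by omega
  have hnl : n ≤ 2 * l + 1 := by
    have h1 : (s : ℝ) = s' + l + 1 := by exact_mod_cast hsl
    have h2 : (n : ℝ) < 2 * l + 2 := by linarith
    have h3 : n < 2 * l + 2 := by exact_mod_cast h2
    omega
  set K : ℝ := (volume (Metric.ball (0 : EuclideanSpace ℝ (Fin n)) 1)).toReal with hK
  have hK0 : 0 < K := ENNReal.toReal_pos (Metric.measure_ball_pos volume _ one_pos).ne'
    measure_ball_lt_top.ne
  have hKe : volume (Metric.ball (0 : EuclideanSpace ℝ (Fin n)) 1) = ENNReal.ofReal K :=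
    (ENNReal.ofReal_toReal measure_ball_lt_top.ne).symm
  set M : ℝ := (4 : ℝ) ^ (s + |δ|) with hM
  have hM0 : 0 < M := by positivity
  set C₀ : ℝ := ((l + 2 : ℕ) : ℝ) * (((l + 2 : ℕ) : ℝ) * (4 * M)) * 2 ^ n / K with hC₀
  have hC₀0 : 0 < C₀ := by positivity
  refine ⟨Real.sqrt C₀, Real.sqrt_pos.2 hC₀0, fun u hu hfin m hm x => ?_⟩
  set a : ℝ := 1 + ‖x‖ ^ 2 with ha
  have ha1 : 1 ≤ a := by rw [ha]; nlinarith [sq_nonneg ‖x‖]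
  have ha0 : 0 < a := by linarith
  -- The radius is half the weight, so that `1 + ‖y‖ ^ 2` is comparable to `a` on the ball.
  set r : ℝ := Real.sqrt a / 2 with hr
  have hr0 : 0 < r := by positivity
  have hr2 : r ^ 2 = a / 4 := by rw [hr, div_pow, Real.sq_sqrt ha0.le]; norm_num
  set H : ℝ := HNorm n s δ u with hH
  have hH0 : 0 ≤ H := Real.sqrt_nonneg _
  set φ : ℝ := ‖iteratedFDeriv ℝ m u x‖ with hφ
  have hterm : ∀ j ∈ Finset.range (l + 2),
      ENNReal.ofReal (a ^ (m + δ)) * (ENNReal.ofReal (r ^ j) ^ 2 *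
        (4 * ∫⁻ y in Metric.ball x r, ‖iteratedFDeriv ℝ (m + j) u y‖ₑ ^ 2)) ≤
      ENNReal.ofReal (4 * M * H ^ 2) := by
    intro j hj
    have hj' : m + j ≤ s := by have := Finset.mem_range.1 hj; omega
    have h1 := lintegral_ball_le_HNorm hfin hj' x
    rw [← ha, ← hr, ← hH, ← hM] at h1
    have h2 : ENNReal.ofReal (a ^ (m + δ)) * ENNReal.ofReal (r ^ j) ^ 2 ≤
        ENNReal.ofReal (a ^ (((m + j : ℕ) : ℝ) + δ)) := by
      rw [← ENNReal.ofReal_pow (by positivity), ← ENNReal.ofReal_mul (by positivity)]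
      refine ENNReal.ofReal_le_ofReal ?_
      rw [← pow_mul, mul_comm j 2, pow_mul, hr2, Nat.cast_add,
        show (m : ℝ) + j + δ = m + δ + j by ring, Real.rpow_add ha0 (m + δ) j,
        Real.rpow_natCast]
      refine mul_le_mul_of_nonneg_left ?_ (by positivity)
      exact pow_le_pow_left₀ (by positivity) (by linarith) j
    calc _ = 4 * ((ENNReal.ofReal (a ^ (m + δ)) * ENNReal.ofReal (r ^ j) ^ 2) *
          ∫⁻ y in Metric.ball x r, ‖iteratedFDeriv ℝ (m + j) u y‖ₑ ^ 2) := by ring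
      _ ≤ 4 * (ENNReal.ofReal (a ^ (((m + j : ℕ) : ℝ) + δ)) *
          ∫⁻ y in Metric.ball x r, ‖iteratedFDeriv ℝ (m + j) u y‖ₑ ^ 2) := by gcongr
      _ ≤ 4 * ENNReal.ofReal (M * H ^ 2) := by gcongr
      _ = ENNReal.ofReal (4 * M * H ^ 2) := by
          rw [mul_assoc, ENNReal.ofReal_mul (by norm_num : (0 : ℝ) ≤ 4), ENNReal.ofReal_ofNat]
  have hloc := mul_le_mul_right (local_sobolev hnl (by omega : m + l + 1 ≤ s) hu x hr0)
    (ENNReal.ofReal (a ^ (m + δ)))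
  have hreal : a ^ (m + δ) * (φ ^ 2 * (r ^ n * K)) ≤
      ((l + 2 : ℕ) : ℝ) * (((l + 2 : ℕ) : ℝ) * (4 * M * H ^ 2)) := by
    rw [← ENNReal.ofReal_le_ofReal_iff (by positivity)]
    calc ENNReal.ofReal (a ^ (m + δ) * (φ ^ 2 * (r ^ n * K)))
        = ENNReal.ofReal (a ^ (m + δ)) * (‖iteratedFDeriv ℝ m u x‖ₑ ^ 2 *
          (ENNReal.ofReal (r ^ n) *
            volume (Metric.ball (0 : EuclideanSpace ℝ (Fin n)) 1))) := by
          rw [ENNReal.ofReal_mul (by positivity), ENNReal.ofReal_mul (by positivity),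
            ENNReal.ofReal_mul (by positivity), ENNReal.ofReal_pow (by positivity), hKe,
            hφ, ofReal_norm]
      _ ≤ _ := hloc
      _ = (l + 2 : ℕ) * ∑ j ∈ Finset.range (l + 2), ENNReal.ofReal (a ^ (m + δ)) *
          (ENNReal.ofReal (r ^ j) ^ 2 *
          (4 * ∫⁻ y in Metric.ball x r, ‖iteratedFDeriv ℝ (m + j) u y‖ₑ ^ 2)) := by
          rw [← Finset.mul_sum]
          ring
      _ ≤ (l + 2 : ℕ) * ∑ j ∈ Finset.range (l + 2), ENNReal.ofReal (4 * M * H ^ 2) := by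
          gcongr with j hj
          exact hterm j hj
      _ = _ := by
          rw [Finset.sum_const, Finset.card_range, nsmul_eq_mul,
            ENNReal.ofReal_mul (Nat.cast_nonneg (α := ℝ) (l + 2)),
            ENNReal.ofReal_mul (Nat.cast_nonneg (α := ℝ) (l + 2)), ENNReal.ofReal_natCast]
  have hrn : r ^ n = a ^ ((n : ℝ) / 2) / 2 ^ n := by
    rw [hr, div_pow, Real.sqrt_eq_rpow, ← Real.rpow_natCast (a ^ (1 / 2 : ℝ)),
      ← Real.rpow_mul ha0.le]
    congr 2
    ring
  have hbound : a ^ (m + δ + n / 2) * φ ^ 2 ≤ C₀ * H ^ 2 := by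
    rw [Real.rpow_add ha0]
    rw [hrn] at hreal
    rw [hC₀, div_mul_eq_mul_div, le_div_iff₀ hK0]
    have h1 := mul_le_mul_of_nonneg_left hreal (show (0 : ℝ) ≤ 2 ^ n by positivity)
    refine (le_of_eq ?_).trans (h1.trans (le_of_eq ?_))
    · field_simp
    · ring
  have hexp : a ^ (δ' + m) ≤ a ^ (m + δ + n / 2) :=
    Real.rpow_le_rpow_of_exponent_le ha1 (by linarith)
  refine (sq_le_sq₀ (by positivity) (by positivity)).1 ?_
  calc (a ^ ((δ' + m) / 2) * φ) ^ 2 = a ^ (δ' + m) * φ ^ 2 := by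
        rw [mul_pow, ← Real.rpow_natCast (a ^ ((δ' + m) / 2)), ← Real.rpow_mul ha0.le]
        congr 2
        push_cast
        ring
    _ ≤ a ^ (m + δ + n / 2) * φ ^ 2 := by gcongr
    _ ≤ C₀ * H ^ 2 := hbound
    _ = (Real.sqrt C₀ * H) ^ 2 := by rw [mul_pow, Real.sq_sqrt hC₀0.le]
end

section
/- Multiplication property of weighted Sobolev spaces on Euclidean space: let n ≥ 1, let s, s₁, s₂ ≥ 0 be integers and δ, δ₁, δ₂ real numbers with s₁ ≥ s, s₂ ≥ s, s < s₁ + s₂ − n/2 and δ < δ₁ + δ₂ + n/2. Then there is a constant C > 0 such that whenever u₁ : ℝ^n → ℝ is of class C^{s₁} with finite H_{s₁,δ₁}-norm and u₂ : ℝ^n → ℝ is of class C^{s₂} with finite H_{s₂,δ₂}-norm, the pointwise product u₁·u₂ has finite H_{s,δ}-norm and ‖u₁·u₂‖_{H_{s,δ}} ≤ C ‖u₁‖_{H_{s₁,δ₁}} ‖u₂‖_{H_{s₂,δ₂}}. -/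
/-!
Everything is an inequality between extended nonnegative integrals, so that finiteness of the
norm of the product and the bound come out together; write `d` for the dimension and
`⟨x⟩ = (1 + ‖x‖²)^(1/2)`.

*Unweighted estimate.* For compactly supported `f`, `g` and `d < 2 (k + l)` one has
`‖f g‖_{L²} ≤ C ‖f‖_{H^k} ‖g‖_{H^l}` (`lintegral_mul_sq_le_of_hasCompactSupport`). By Plancherel
the left side is the `L²` norm of the convolution of the Fourier transforms. Multiplying and
dividing by `⟨η⟩^k ⟨ξ - η⟩^l` and applying Cauchy–Schwarz, this is controlled by
`sup_ξ ∫ ⟨η⟩^(-2k) ⟨ξ - η⟩^(-2l) dη`, which is finite because the smaller of `⟨η⟩`, `⟨ξ - η⟩` can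
be given the whole exponent `-2 (k + l)` (`lintegral_conv_sq_le`). No Sobolev embedding and no
fractional derivative is needed.

*Localization.* Cutting off and rescaling gives the same estimate on a ball of radius `R` about an
arbitrary point, with the factor `R^(-d)` and derivatives of order `i` weighted by `R^(2i)`
(`lintegral_ball_scaled_mul_sq_le`).

*Weights.* On the ball of radius `⟨y⟩ / 2` about `y` the weights `⟨x⟩` and `⟨y⟩` are comparable, so
the choice `R = ⟨y⟩ / 2` turns the local estimate into a weighted one, as long as
`δ ≤ δ₁ + δ₂ + d / 2`. Integrating over the centre `y` against `⟨y⟩^(-d) dy` recovers integrals over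
the whole space, since by Tonelli each point `x` is counted with a mass bounded above and below
(`lintegral_le_lintegral_centers`, `lintegral_centers_le`). In the product of the two local norms
one factor is bounded by its global value before integrating. This proves the case `s = 0`
(`lintegral_mul_sq_wt_le`).

*Derivatives.* The general case is an induction on `s` (`wSob_mul_le`): a directional derivative
of `u v` is `∂u v + u ∂v`, and `∂` maps the weighted space with indices `(s + 1, δ)` to the one
with indices `(s, δ + 1)`, which preserves both conditions on the indices.
-/

open MeasureTheory

open scoped FourierTransform ENNReal SchwartzMap RealInnerProductSpace

/-! ### Pointwise facts about derivatives and weights -/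

section Pointwise

variable {V F : Type*} [NormedAddCommGroup V] [NormedSpace ℝ V]
  [NormedAddCommGroup F] [NormedSpace ℝ F]

theorem enorm_iteratedFDeriv_dirDeriv_le {m : ℕ} {f : V → F} (hf : ContDiff ℝ (m + 1 : ℕ) f) (v : V)
    (hv : ‖v‖ ≤ 1) (x : V) :
    ‖iteratedFDeriv ℝ m (fun y => fderiv ℝ f y v) x‖ₑ ≤ ‖iteratedFDeriv ℝ (m + 1) f x‖ₑ := by
  have h1 : ContDiff ℝ m (fderiv ℝ f) := hf.fderiv_right (by norm_cast)
  rw [enorm_le_iff_norm_le, ← norm_iteratedFDeriv_fderiv]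
  refine (norm_iteratedFDeriv_clm_apply_const h1.contDiffAt le_rfl).trans ?_
  exact mul_le_of_le_one_left (norm_nonneg _) hv

theorem measurable_enorm_iteratedFDeriv_sq [MeasurableSpace V] [BorelSpace V]
    {k i : ℕ} {u : V → F} (hu : ContDiff ℝ k u) (hi : i ≤ k) :
    Measurable fun x => ‖iteratedFDeriv ℝ i u x‖ₑ ^ 2 :=
  (hu.continuous_iteratedFDeriv (by exact_mod_cast hi)).enorm.measurable.pow_const 2

/-- Chain rule for the affine map `z ↦ y + R z`, in the form needed for rescaling. -/
theorem enorm_iteratedFDeriv_comp_affine_le {k i : ℕ} {u : V → ℝ} (hu : ContDiff ℝ k u)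
    (hi : i ≤ k) (y : V) {R : ℝ} (hR : 0 < R) (z : V) :
    ‖iteratedFDeriv ℝ i (fun z => u (y + R • z)) z‖ₑ ^ 2 ≤
      ENNReal.ofReal (R ^ (2 * i)) * ‖iteratedFDeriv ℝ i u (y + R • z)‖ₑ ^ 2 := by
  let g : V →L[ℝ] V := R • ContinuousLinearMap.id ℝ V
  have hg : ‖g‖ ≤ R := by
    rw [norm_smul, Real.norm_eq_abs, abs_of_pos hR]
    exact mul_le_of_le_one_right hR.le ContinuousLinearMap.norm_id_le
  have h1 : (fun z => u (y + R • z)) = (fun x => u (y + x)) ∘ g := by ext z; simp [g]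
  have h2 : ContDiff ℝ k (fun x => u (y + x)) := hu.comp (contDiff_const.add contDiff_id)
  have h3 : ‖iteratedFDeriv ℝ i (fun z => u (y + R • z)) z‖ ≤
      R ^ i * ‖iteratedFDeriv ℝ i u (y + R • z)‖ := by
    rw [h1, g.iteratedFDeriv_comp_right h2 z (by exact_mod_cast hi), iteratedFDeriv_comp_add_left]
    refine (ContinuousMultilinearMap.norm_compContinuousLinearMap_le _ _).trans ?_
    rw [mul_comm, Finset.prod_const, Finset.card_univ, Fintype.card_fin]
    have : g z = R • z := by simp [g]
    rw [this]
    gcongr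
  have h4 := ENNReal.ofReal_le_ofReal (pow_le_pow_left₀ (norm_nonneg _) h3 2)
  rw [mul_pow, ENNReal.ofReal_mul (by positivity), ENNReal.ofReal_pow (norm_nonneg _),
    ENNReal.ofReal_pow (norm_nonneg _), ofReal_norm, ofReal_norm, ← pow_mul, mul_comm i] at h4
  exact h4

/-- A derivative of order `m + 1` is controlled by the derivatives of order `m` of the partial
derivatives in an orthonormal basis. -/
theorem enorm_iteratedFDeriv_succ_sq_le {V : Type*} [NormedAddCommGroup V]
    [InnerProductSpace ℝ V] [FiniteDimensional ℝ V] {m : ℕ} {f : V → ℝ}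
    (hf : ContDiff ℝ (m + 1 : ℕ) f) (x : V) : ‖iteratedFDeriv ℝ (m + 1) f x‖ₑ ^ 2 ≤ (Module.finrank ℝ V) *
      ∑ j, ‖iteratedFDeriv ℝ m (fun y => fderiv ℝ f y (stdOrthonormalBasis ℝ V j)) x‖ₑ ^ 2 := by
  set b := stdOrthonormalBasis ℝ V with hb
  have hd : ∀ v : V, ContDiff ℝ m (fun y => fderiv ℝ f y v) := fun v =>
    (hf.fderiv_right (m := m) (by norm_cast)).clm_apply contDiff_const
  let L : Fin (Module.finrank ℝ V) → ℝ →L[ℝ] (V →L[ℝ] ℝ) := fun j =>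
    (ContinuousLinearMap.id ℝ ℝ).smulRight (innerSL ℝ (b j))
  have hL : ∀ j, ‖L j‖ ≤ 1 := by
    intro j
    simp only [L, ContinuousLinearMap.norm_smulRight_apply, innerSL_apply_norm, b.norm_eq_one,
      mul_one]
    exact ContinuousLinearMap.norm_id_le
  have h1 : fderiv ℝ f = fun y => ∑ j, (L j ∘ fun y => fderiv ℝ f y (b j)) y := by
    ext y z
    simp only [L, Function.comp, ContinuousLinearMap.smulRight_apply, ContinuousLinearMap.id_apply,
      sum_apply, smul_apply, innerSL_apply_apply,
      smul_eq_mul]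
    conv_lhs => rw [← b.sum_repr' z, map_sum]
    refine Finset.sum_congr rfl fun j _ => ?_
    rw [map_smul, smul_eq_mul, mul_comm]
  have h2 : ‖iteratedFDeriv ℝ (m + 1) f x‖ ≤
      ∑ j, ‖iteratedFDeriv ℝ m (fun y => fderiv ℝ f y (b j)) x‖ := by
    rw [← norm_iteratedFDeriv_fderiv]
    conv_lhs =>
      rw [h1, iteratedFDeriv_sum (fun j _ => (L j).contDiff.comp (hd (b j))), Finset.sum_apply]
    refine (norm_sum_le _ _).trans (Finset.sum_le_sum fun j _ => ?_)
    refine ((L j).norm_iteratedFDeriv_comp_left (hd (b j)).contDiffAt le_rfl).trans ?_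
    exact mul_le_of_le_one_left (norm_nonneg _) (hL j)
  have h3 : ‖iteratedFDeriv ℝ (m + 1) f x‖ ^ 2 ≤ (Module.finrank ℝ V) *
      ∑ j, ‖iteratedFDeriv ℝ m (fun y => fderiv ℝ f y (b j)) x‖ ^ 2 := by
    refine (pow_le_pow_left₀ (norm_nonneg _) h2 2).trans ?_
    refine sq_sum_le_card_mul_sum_sq.trans ?_
    simp
  have h4 := ENNReal.ofReal_le_ofReal h3
  rw [ENNReal.ofReal_mul (by positivity),
    ENNReal.ofReal_sum_of_nonneg (by intros; positivity)] at h4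
  simpa only [ENNReal.ofReal_pow (norm_nonneg _), ofReal_norm, ENNReal.ofReal_natCast] using h4

end Pointwise

section Weight

variable {V : Type*} [NormedAddCommGroup V]

/-- The weight `(1 + ‖x‖²)^t`, with values in `ℝ≥0∞`. -/
noncomputable def wt (t : ℝ) (x : V) : ℝ≥0∞ := ENNReal.ofReal ((1 + ‖x‖ ^ 2) ^ t)

theorem measurable_wt [MeasurableSpace V] [BorelSpace V] (t : ℝ) :
    Measurable (wt t : V → ℝ≥0∞) := by
  unfold wt; fun_prop

theorem wt_add (s t : ℝ) (x : V) : wt (s + t) x = wt s x * wt t x := by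
  unfold wt
  rw [← ENNReal.ofReal_mul (by positivity), Real.rpow_add (by positivity)]

theorem wt_mono {s t : ℝ} (h : s ≤ t) (x : V) : wt s x ≤ wt t x :=
  ENNReal.ofReal_le_ofReal (Real.rpow_le_rpow_of_exponent_le (by simp) h)

/-- At points where `1 + ‖·‖²` differs by at most a factor `4`, the weights are comparable. -/
theorem wt_le_of_comparable (t : ℝ) {x y : V} (h1 : 1 + ‖x‖ ^ 2 ≤ 4 * (1 + ‖y‖ ^ 2))
    (h2 : 1 + ‖y‖ ^ 2 ≤ 4 * (1 + ‖x‖ ^ 2)) :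
    wt t x ≤ ENNReal.ofReal (4 ^ |t|) * wt t y := by
  unfold wt
  rw [← ENNReal.ofReal_mul (by positivity)]
  refine ENNReal.ofReal_le_ofReal ?_
  rcases le_total 0 t with ht | ht
  · rw [abs_of_nonneg ht, ← Real.mul_rpow (by norm_num) (by positivity)]
    exact Real.rpow_le_rpow (by positivity) h1 ht
  · rw [abs_of_nonpos ht, Real.rpow_neg (by norm_num), ← Real.inv_rpow (by norm_num),
      ← Real.mul_rpow (by norm_num) (by positivity)]
    exact Real.rpow_le_rpow_of_nonpos (by positivity) (by linarith) ht

/-- `1 + ‖·‖²` varies by at most a factor `4` on the ball of radius `(1 + ‖y‖²)^(1/2) / 2` about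
`y`. -/
theorem comparable_of_dist_le {x y : V} (h : dist x y ≤ √(1 + ‖y‖ ^ 2) / 2) :
    1 + ‖x‖ ^ 2 ≤ 4 * (1 + ‖y‖ ^ 2) ∧ 1 + ‖y‖ ^ 2 ≤ 4 * (1 + ‖x‖ ^ 2) := by
  rw [dist_eq_norm] at h
  have h0 : ‖x - y‖ ^ 2 ≤ (1 + ‖y‖ ^ 2) / 4 := by
    calc _ ≤ (√(1 + ‖y‖ ^ 2) / 2) ^ 2 := by gcongr
      _ = _ := by rw [div_pow, Real.sq_sqrt (by positivity)]; norm_num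
  have h1 : ‖x‖ ≤ ‖x - y‖ + ‖y‖ := by simpa using norm_add_le (x - y) y
  have h2 : ‖y‖ ≤ ‖x - y‖ + ‖x‖ := by
    rw [norm_sub_rev]; simpa using norm_add_le (y - x) x
  have h3 : ‖x‖ ^ 2 ≤ 2 * ‖x - y‖ ^ 2 + 2 * ‖y‖ ^ 2 := by
    nlinarith [norm_nonneg x, sq_nonneg (‖x - y‖ - ‖y‖)]
  have h4 : ‖y‖ ^ 2 ≤ 2 * ‖x - y‖ ^ 2 + 2 * ‖x‖ ^ 2 := by
    nlinarith [norm_nonneg y, sq_nonneg (‖x - y‖ - ‖x‖)]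
  constructor <;> nlinarith [sq_nonneg ‖y‖, sq_nonneg ‖x‖]

end Weight

/-! ### The Fourier transform of compactly supported functions -/

section Fourier

variable {V : Type*} [NormedAddCommGroup V] [InnerProductSpace ℝ V] [FiniteDimensional ℝ V]
  [MeasurableSpace V] [BorelSpace V]

theorem continuous_fourier_cc {f : V → ℂ} (hf : Continuous f) (hc : HasCompactSupport f) :
    Continuous (𝓕 f) :=
  VectorFourier.fourierIntegral_continuous Real.continuous_fourierChar
    (by exact continuous_inner) (hf.integrable_of_hasCompactSupport hc)

/-- The `L²` Fourier transform, defined by extension from Schwartz functions, agrees with the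
Fourier integral on continuous compactly supported functions. Both are tested against smooth
compactly supported functions. -/
theorem fourier_toLp_ae_eq {f : V → ℂ} (hf : Continuous f) (hc : HasCompactSupport f) :
    (𝓕 ((hf.memLp_of_hasCompactSupport hc : MemLp f 2 volume).toLp f) : Lp ℂ 2 (volume : Measure V))
      =ᵐ[volume] 𝓕 f := by
  set φ := (hf.memLp_of_hasCompactSupport hc : MemLp f 2 volume).toLp f with hφ
  have hφf : φ =ᵐ[volume] f := MemLp.coeFn_toLp _
  refine ae_eq_of_integral_contDiff_smul_eq ?_ ?_ ?_
  · exact (Lp.memLp _).locallyIntegrable (by norm_num)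
  · exact (continuous_fourier_cc hf hc).locallyIntegrable
  · intro g hg hgc
    have hg1 : HasCompactSupport (Complex.ofRealCLM ∘ g) := hgc.comp_left rfl
    have hg2 : ContDiff ℝ ((⊤ : ℕ∞) : WithTop ℕ∞) (Complex.ofRealCLM ∘ g) := by fun_prop
    set G : 𝓢(V, ℂ) := hg1.toSchwartzMap hg2 with hG
    have hGv : ∀ x, G x = (g x : ℂ) := fun x => by simp [hG]
    have h1 := DFunLike.congr_fun (Lp.fourier_toTemperedDistribution_eq φ) G
    rw [TemperedDistribution.fourier_apply, Lp.toTemperedDistribution_apply,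
      Lp.toTemperedDistribution_apply] at h1
    have h2 : ∫ x, g x • (𝓕 φ : Lp ℂ 2 (volume : Measure V)) x = ∫ x, (𝓕 G) x • φ x := by
      rw [h1]; refine integral_congr_ae (.of_forall fun x => ?_); simp [hGv]
    rw [h2]
    have h3 : ∫ x, (𝓕 G) x • φ x = ∫ x, (𝓕 (G : V → ℂ)) x • f x := by
      refine integral_congr_ae ?_
      filter_upwards [hφf] with x hx
      rw [hx, SchwartzMap.fourier_coe]
    -- Self-adjointness of the Fourier integral.
    have h4 : ∫ x, (𝓕 (G : V → ℂ)) x • f x = ∫ x, G x • 𝓕 f x := by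
      have := VectorFourier.integral_fourierIntegral_smul_eq_flip (L := innerₗ V) (μ := volume)
        (ν := volume) Real.continuous_fourierChar continuous_inner G.integrable
        (hf.integrable_of_hasCompactSupport hc)
      rwa [flip_innerₗ] at this
    rw [h3, h4]
    refine integral_congr_ae (.of_forall fun x => ?_); simp [hGv]

/-- Plancherel's theorem for continuous compactly supported functions. -/
theorem lintegral_fourier_sq {f : V → ℂ} (hf : Continuous f) (hc : HasCompactSupport f) :
    ∫⁻ ξ, ‖𝓕 f ξ‖ₑ ^ 2 = ∫⁻ x, ‖f x‖ₑ ^ 2 := by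
  set φ := (hf.memLp_of_hasCompactSupport hc : MemLp f 2 volume).toLp f with hφ
  have h := Lp.norm_fourier_eq φ
  have key : ∀ g : V → ℂ, ∫⁻ x, ‖g x‖ₑ ^ 2 = eLpNorm g 2 volume ^ 2 := by
    intro g
    rw [eLpNorm_eq_lintegral_rpow_enorm_toReal (by norm_num) (by norm_num), ← ENNReal.rpow_natCast,
      ← ENNReal.rpow_mul]
    simp
  rw [key, key, ← eLpNorm_congr_ae (fourier_toLp_ae_eq hf hc),
    ← eLpNorm_congr_ae (MemLp.coeFn_toLp (hf.memLp_of_hasCompactSupport hc : MemLp f 2 volume)),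
    ← hφ, ← Lp.enorm_def, ← Lp.enorm_def, ← ofReal_norm, ← ofReal_norm, h]

/-- The Fourier transform of a product is dominated by the convolution of the absolute values of
the Fourier transforms: write `𝓕 (f g) ξ` as the `L²` inner product of `f` with a modulation of
the conjugate of `g`, and apply Parseval. -/
theorem enorm_fourier_mul_le {f g : V → ℂ} (hf : Continuous f) (hfc : HasCompactSupport f)
    (hg : Continuous g) (hgc : HasCompactSupport g) (ξ : V) :
    ‖𝓕 (fun x => f x * g x) ξ‖ₑ ≤ ∫⁻ η, ‖𝓕 f η‖ₑ * ‖𝓕 g (ξ - η)‖ₑ := by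
  -- `𝓕 (f g) ξ = ⟪a, f⟫` in `L²`.
  set a : V → ℂ := fun x => (𝐞 ⟪x, ξ⟫ : ℂ) * starRingEnd ℂ (g x) with ha
  have ha1 : Continuous a := by
    have : Continuous fun x : V => (𝐞 ⟪x, ξ⟫ : ℂ) := by
      have := Real.continuous_fourierChar
      fun_prop
    exact this.mul (Complex.continuous_conj.comp hg)
  have ha2 : HasCompactSupport a := (hgc.comp_left (map_zero _)).mul_left
  set A := (ha1.memLp_of_hasCompactSupport ha2 : MemLp a 2 volume).toLp a
  set B := (hf.memLp_of_hasCompactSupport hfc : MemLp f 2 volume).toLp f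
  have h := Lp.inner_fourier_eq A B
  rw [L2.inner_def, L2.inner_def] at h
  have h1 : 𝓕 (fun x => f x * g x) ξ = ∫ x, inner ℂ (A x) (B x) := by
    rw [Real.fourier_eq]
    refine integral_congr_ae ?_
    filter_upwards [MemLp.coeFn_toLp (ha1.memLp_of_hasCompactSupport ha2 : MemLp a 2 volume),
      MemLp.coeFn_toLp (hf.memLp_of_hasCompactSupport hfc : MemLp f 2 volume)] with x h1 h2
    rw [h1, h2]
    simp [ha, Circle.smul_def, ← Circle.coe_inv_eq_conj, AddChar.map_neg_eq_inv]
    ring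
  have h4 : ∀ η, 𝓕 a η = starRingEnd ℂ (𝓕 g (ξ - η)) := by
    intro η
    rw [Real.fourier_eq, Real.fourier_eq, ← integral_conj]
    refine integral_congr_ae (.of_forall fun x => ?_)
    simp only [ha, Circle.smul_def, smul_eq_mul, map_mul, ← Circle.coe_inv_eq_conj,
      ← AddChar.map_neg_eq_inv, neg_neg]
    rw [inner_sub_right, sub_eq_neg_add, AddChar.map_add_eq_mul, Circle.coe_mul]
    ring
  rw [h1, ← h]
  refine (enorm_integral_le_lintegral_enorm _).trans (lintegral_mono_ae ?_)
  filter_upwards [fourier_toLp_ae_eq ha1 ha2, fourier_toLp_ae_eq hf hfc] with η h2 h3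
  rw [h2, h3, h4, RCLike.inner_apply, enorm_mul]
  simp

end Fourier

/-! ### The unweighted product estimate -/

section Product

variable {V : Type*} [NormedAddCommGroup V] [InnerProductSpace ℝ V] [FiniteDimensional ℝ V]
  [MeasurableSpace V] [BorelSpace V]

/-- The square of the unweighted Sobolev norm of order `k`: the sum of the squared `L²` norms of the
derivatives of order at most `k`, as an extended nonnegative real. -/
noncomputable def sobSum {F : Type*} [NormedAddCommGroup F] [NormedSpace ℝ F]
    (k : ℕ) (f : V → F) : ℝ≥0∞ :=
  ∑ i ∈ Finset.range (k + 1), ∫⁻ x, ‖iteratedFDeriv ℝ i f x‖ₑ ^ 2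

theorem sobSum_mono_dirDeriv {k : ℕ} {f : V → ℂ} (hf : ContDiff ℝ (k + 1 : ℕ) f) (v : V)
    (hv : ‖v‖ ≤ 1) : sobSum k (fun y => fderiv ℝ f y v) ≤ sobSum (k + 1) f := by
  unfold sobSum
  rw [Finset.sum_range_succ' _ (k + 1)]
  refine le_trans (Finset.sum_le_sum fun i hi => ?_) le_self_add
  refine lintegral_mono fun x => ?_
  dsimp only
  gcongr
  refine enorm_iteratedFDeriv_dirDeriv_le (hf.of_le ?_) v hv x
  have := Finset.mem_range.1 hi
  norm_cast

theorem sobSum_succ_le (k : ℕ) (f : V → ℂ) : sobSum k f ≤ sobSum (k + 1) f := by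
  unfold sobSum
  rw [Finset.sum_range_succ _ (k + 1)]
  exact le_self_add

/-- A directional derivative becomes multiplication by `2πi⟪v, ξ⟫` on the Fourier side; the factor
`2π ≥ 1` is dropped. -/
theorem enorm_fourier_dirDeriv {f : V → ℂ} (hf : ContDiff ℝ 1 f) (hc : HasCompactSupport f)
    (v ξ : V) : ‖inner ℝ v ξ‖ₑ * ‖𝓕 f ξ‖ₑ ≤ ‖𝓕 (fun y => fderiv ℝ f y v) ξ‖ₑ := by
  have hi : Integrable (fderiv ℝ f) :=
    (hf.continuous_fderiv (by norm_num)).integrable_of_hasCompactSupport (hc.fderiv ℝ)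
  have h1 : 𝓕 (fun y => fderiv ℝ f y v) ξ = 𝓕 (fderiv ℝ f) ξ v :=
    (Real.fourier_continuousLinearMap_apply hi).symm
  rw [h1, Real.fourier_fderiv (hf.continuous.integrable_of_hasCompactSupport hc)
    (hf.differentiable (by norm_num)) hi, VectorFourier.fourierSMulRight_apply, ← ofReal_norm,
    ← ofReal_norm, ← ofReal_norm, ← ENNReal.ofReal_mul (norm_nonneg _)]
  refine ENNReal.ofReal_le_ofReal ?_
  simp only [norm_neg, norm_smul, norm_mul, Complex.norm_I, Complex.norm_ofNat, mul_one,
    Complex.norm_real, neg_apply, Real.norm_eq_abs, abs_of_pos Real.pi_pos]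
  rw [innerSL_apply_apply, real_inner_comm]
  have h1 : 1 ≤ 2 * Real.pi := by linarith [Real.pi_gt_three]
  exact le_mul_of_one_le_left (by positivity) h1

/-- Half of the Fourier characterization of `H^k`. The induction uses
`1 + ‖ξ‖² = 1 + ∑ⱼ ⟪bⱼ, ξ⟫²` for an orthonormal basis `b`. -/
theorem lintegral_fourier_weight_le (k : ℕ) : ∃ C : ℝ≥0∞, C ≠ ∞ ∧ ∀ f : V → ℂ,
    ContDiff ℝ k f → HasCompactSupport f →
    ∫⁻ ξ, ‖𝓕 f ξ‖ₑ ^ 2 * ENNReal.ofReal ((1 + ‖ξ‖ ^ 2) ^ k) ≤ C * sobSum k f := by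
  induction k with
  | zero =>
    refine ⟨1, by simp, fun f hf hc => ?_⟩
    simp only [pow_zero, ENNReal.ofReal_one, mul_one, one_mul]
    rw [lintegral_fourier_sq hf.continuous hc]
    simp only [sobSum, zero_add, Finset.sum_range_one]
    refine (lintegral_congr fun x => ?_).le
    rw [← ofReal_norm, ← ofReal_norm, norm_iteratedFDeriv_zero]
  | succ k ih =>
    obtain ⟨C, hC, ih⟩ := ih
    let b := stdOrthonormalBasis ℝ V
    refine ⟨C * (1 + Module.finrank ℝ V), by finiteness, fun f hf hc => ?_⟩
    have hd : ∀ v : V, ContDiff ℝ k (fun y => fderiv ℝ f y v) := fun v =>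
      (hf.fderiv_right (m := k) (by norm_cast)).clm_apply contDiff_const
    have hdc : ∀ v : V, HasCompactSupport (fun y => fderiv ℝ f y v) := fun v =>
      hc.fderiv_apply ℝ v
    have hf0 : ContDiff ℝ k f := hf.of_le (by norm_cast; omega)
    have hmeas : ∀ g : V → ℂ, ContDiff ℝ k g → HasCompactSupport g →
        Measurable fun ξ => ‖𝓕 g ξ‖ₑ ^ 2 * ENNReal.ofReal ((1 + ‖ξ‖ ^ 2) ^ k) := by
      intro g hg hgc
      have := (continuous_fourier_cc hg.continuous hgc).measurable
      fun_prop
    have hpt : ∀ ξ, ‖𝓕 f ξ‖ₑ ^ 2 * ENNReal.ofReal ((1 + ‖ξ‖ ^ 2) ^ (k + 1)) ≤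
        ‖𝓕 f ξ‖ₑ ^ 2 * ENNReal.ofReal ((1 + ‖ξ‖ ^ 2) ^ k) +
        ∑ j, ‖𝓕 (fun y => fderiv ℝ f y (b j)) ξ‖ₑ ^ 2 * ENNReal.ofReal ((1 + ‖ξ‖ ^ 2) ^ k) := by
      intro ξ
      rw [← Finset.sum_mul, ← add_mul, pow_succ (1 + ‖ξ‖ ^ 2) k, mul_comm (_ ^ k),
        ENNReal.ofReal_mul (by positivity), ← mul_assoc]
      gcongr
      rw [← b.sum_sq_norm_inner_right ξ, ENNReal.ofReal_add (by norm_num) (by positivity),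
        mul_add, ENNReal.ofReal_one, mul_one, ENNReal.ofReal_sum_of_nonneg (by intros; positivity),
        Finset.mul_sum]
      gcongr with j
      rw [ENNReal.ofReal_pow (norm_nonneg _), ofReal_norm, ← mul_pow, mul_comm]
      gcongr
      exact enorm_fourier_dirDeriv (hf.of_le (by norm_cast; omega)) hc _ _
    calc _ ≤ _ := lintegral_mono hpt
      _ = (∫⁻ ξ, ‖𝓕 f ξ‖ₑ ^ 2 * ENNReal.ofReal ((1 + ‖ξ‖ ^ 2) ^ k)) +
        ∑ j, ∫⁻ ξ, ‖𝓕 (fun y => fderiv ℝ f y (b j)) ξ‖ₑ ^ 2 *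
          ENNReal.ofReal ((1 + ‖ξ‖ ^ 2) ^ k) := by
        rw [lintegral_add_left (hmeas f hf0 hc), lintegral_finsetSum]
        exact fun j _ => hmeas _ (hd _) (hdc _)
      _ ≤ C * sobSum (k + 1) f + ∑ j : Fin (Module.finrank ℝ V), C * sobSum (k + 1) f := by
        gcongr with j
        · exact (ih f hf0 hc).trans (by gcongr; exact sobSum_succ_le k f)
        · refine (ih _ (hd _) (hdc _)).trans ?_
          gcongr
          exact sobSum_mono_dirDeriv hf _ (b.norm_eq_one j).le
      _ = _ := by
        simp only [Finset.sum_const, Finset.card_univ, Fintype.card_fin, nsmul_eq_mul]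
        ring

/-- The Cauchy–Schwarz inequality for `ℝ≥0∞`-valued functions. -/
theorem sq_lintegral_mul_le {α : Type*} [MeasurableSpace α] {μ : Measure α} {f g : α → ℝ≥0∞}
    (hf : AEMeasurable f μ) (hg : AEMeasurable g μ) :
    (∫⁻ x, f x * g x ∂μ) ^ 2 ≤ (∫⁻ x, f x ^ 2 ∂μ) * ∫⁻ x, g x ^ 2 ∂μ := by
  have h := ENNReal.lintegral_mul_le_Lp_mul_Lq μ Real.HolderConjugate.two_two hf hg
  have h2 : ∀ t : ℝ≥0∞, (t ^ (1 / 2 : ℝ)) ^ 2 = t := fun t => by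
    rw [← ENNReal.rpow_natCast, ← ENNReal.rpow_mul]; simp
  simp only [ENNReal.rpow_ofNat, Pi.mul_apply] at h
  calc _ ≤ _ := pow_le_pow_left' h 2
    _ = _ := by rw [mul_pow, h2, h2]

/-- Weighted `L²` bound for a convolution. The constant is finite because
`A^(-k) B^(-l) ≤ A^(-(k+l)) + B^(-(k+l))` for `A, B ≥ 1`, and `(1 + ‖ξ‖²)^(-(k+l))` is integrable when
`d < 2 (k + l)`. -/
theorem lintegral_conv_sq_le {k l : ℕ} (h : (Module.finrank ℝ V : ℝ) < 2 * (k + l)) :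
    ∃ C : ℝ≥0∞, C ≠ ∞ ∧ ∀ a b : V → ℝ≥0∞, Measurable a → Measurable b →
    ∫⁻ ξ, (∫⁻ η, a η * b (ξ - η)) ^ 2 ≤
      C * (∫⁻ ξ, a ξ ^ 2 * ENNReal.ofReal ((1 + ‖ξ‖ ^ 2) ^ k)) *
        ∫⁻ ξ, b ξ ^ 2 * ENNReal.ofReal ((1 + ‖ξ‖ ^ 2) ^ l) := by
  set K : ℝ≥0∞ := ∫⁻ ξ : V, ENNReal.ofReal (((1 + ‖ξ‖ ^ 2) ^ (k + l))⁻¹) with hK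
  have hKfin : K ≠ ∞ := by
    have h1 := integrable_rpow_neg_one_add_norm_sq (E := V) (μ := volume) (r := 2 * (k + l)) h
    have h2 := h1.lintegral_lt_top
    convert! h2.ne using 4 with ξ
    rw [show -(2 * ((k : ℝ) + l)) / 2 = -((k + l : ℕ) : ℝ) by push_cast; ring,
      Real.rpow_neg (by positivity), Real.rpow_natCast]
  refine ⟨2 * K, by finiteness, fun a b ha hb => ?_⟩
  set w : V → ℝ := fun ξ => 1 + ‖ξ‖ ^ 2 with hw
  have hw1 : ∀ ξ, 1 ≤ w ξ := fun ξ => by simp [hw]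
  have hw0 : ∀ ξ, 0 < w ξ := fun ξ => zero_lt_one.trans_le (hw1 ξ)
  have hwm : Measurable w := by fun_prop
  have hsq : ∀ (j : ℕ) ξ, ENNReal.ofReal (√(w ξ ^ j)) ^ 2 = ENNReal.ofReal (w ξ ^ j) := by
    intro j ξ
    rw [← ENNReal.ofReal_pow (by positivity), Real.sq_sqrt (pow_nonneg (hw0 ξ).le _)]
  have hsq' : ∀ (j : ℕ) ξ, ENNReal.ofReal (√(w ξ ^ j))⁻¹ ^ 2 = ENNReal.ofReal (w ξ ^ j)⁻¹ := by
    intro j ξ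
    rw [← ENNReal.ofReal_pow (by positivity), inv_pow, Real.sq_sqrt (pow_nonneg (hw0 ξ).le _)]
  have hone : ∀ (j : ℕ) ξ, ENNReal.ofReal (√(w ξ ^ j)) * ENNReal.ofReal (√(w ξ ^ j))⁻¹ = 1 := by
    intro j ξ
    have := Real.sqrt_pos.2 (pow_pos (hw0 ξ) j)
    rw [← ENNReal.ofReal_mul this.le, mul_inv_cancel₀ this.ne', ENNReal.ofReal_one]
  have hreal : ∀ A B : ℝ, 1 ≤ A → 1 ≤ B →
      (A ^ k)⁻¹ * (B ^ l)⁻¹ ≤ (A ^ (k + l))⁻¹ + (B ^ (k + l))⁻¹ := by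
    intro A B hA hB
    rcases le_total A B with h | h
    · have : (A ^ k)⁻¹ * (B ^ l)⁻¹ ≤ (A ^ (k + l))⁻¹ := by
        rw [pow_add, mul_inv]; gcongr
      have : 0 ≤ (B ^ (k + l))⁻¹ := by positivity
      linarith
    · have : (A ^ k)⁻¹ * (B ^ l)⁻¹ ≤ (B ^ (k + l))⁻¹ := by
        rw [pow_add, mul_inv]; gcongr
      have : 0 ≤ (A ^ (k + l))⁻¹ := by positivity
      linarith
  have hinner : ∀ ξ, (∫⁻ η, a η * b (ξ - η)) ^ 2 ≤ 2 * K *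
      ∫⁻ η, (a η ^ 2 * ENNReal.ofReal (w η ^ k)) *
        (b (ξ - η) ^ 2 * ENNReal.ofReal (w (ξ - η) ^ l)) := by
    intro ξ
    have e1 : ∫⁻ η, a η * b (ξ - η) = ∫⁻ η,
        ((a η * ENNReal.ofReal (√(w η ^ k))) * (b (ξ - η) * ENNReal.ofReal (√(w (ξ - η) ^ l)))) *
        (ENNReal.ofReal (√(w η ^ k))⁻¹ * ENNReal.ofReal (√(w (ξ - η) ^ l))⁻¹) := by
      refine lintegral_congr fun η => ?_
      calc a η * b (ξ - η) = a η * b (ξ - η) *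
            (ENNReal.ofReal (√(w η ^ k)) * ENNReal.ofReal (√(w η ^ k))⁻¹) *
            (ENNReal.ofReal (√(w (ξ - η) ^ l)) * ENNReal.ofReal (√(w (ξ - η) ^ l))⁻¹) := by
              rw [hone, hone, mul_one, mul_one]
        _ = _ := by ring
    rw [e1]
    refine (sq_lintegral_mul_le (by fun_prop) (by fun_prop)).trans ?_
    rw [mul_comm]
    gcongr ?_ * ?_
    · calc _ ≤ ∫⁻ η, (ENNReal.ofReal (w η ^ (k + l))⁻¹ +
              ENNReal.ofReal (w (ξ - η) ^ (k + l))⁻¹) := by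
            refine lintegral_mono fun η => ?_
            rw [mul_pow, hsq', hsq', ← ENNReal.ofReal_mul (inv_nonneg.2 (pow_nonneg (hw0 _).le _)),
              ← ENNReal.ofReal_add (inv_nonneg.2 (pow_nonneg (hw0 _).le _))
                (inv_nonneg.2 (pow_nonneg (hw0 _).le _))]
            exact ENNReal.ofReal_le_ofReal (hreal _ _ (hw1 _) (hw1 _))
        _ = 2 * K := by
            rw [lintegral_add_left (by fun_prop),
              lintegral_sub_left_eq_self (fun η => ENNReal.ofReal (w η ^ (k + l))⁻¹) ξ, two_mul]
    · refine (lintegral_congr fun η => ?_).le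
      rw [mul_pow, mul_pow, mul_pow, hsq, hsq]
  calc _ ≤ ∫⁻ ξ, 2 * K * ∫⁻ η, (a η ^ 2 * ENNReal.ofReal (w η ^ k)) *
        (b (ξ - η) ^ 2 * ENNReal.ofReal (w (ξ - η) ^ l)) := lintegral_mono hinner
    _ = 2 * K * ∫⁻ ξ, ∫⁻ η, (a η ^ 2 * ENNReal.ofReal (w η ^ k)) *
        (b (ξ - η) ^ 2 * ENNReal.ofReal (w (ξ - η) ^ l)) :=
        lintegral_const_mul' _ _ (by finiteness)
    _ = 2 * K * ∫⁻ η, ∫⁻ ξ, (a η ^ 2 * ENNReal.ofReal (w η ^ k)) *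
        (b (ξ - η) ^ 2 * ENNReal.ofReal (w (ξ - η) ^ l)) := by
        rw [lintegral_lintegral_swap (by fun_prop)]
    _ = 2 * K * ∫⁻ η, (a η ^ 2 * ENNReal.ofReal (w η ^ k)) *
          ∫⁻ ξ, b ξ ^ 2 * ENNReal.ofReal (w ξ ^ l) := by
        congr 1
        refine lintegral_congr fun η => ?_
        rw [lintegral_const_mul _ (by fun_prop),
          lintegral_sub_right_eq_self (fun ξ => b ξ ^ 2 * ENNReal.ofReal (w ξ ^ l)) η]
    _ = _ := by
        rw [lintegral_mul_const _ (by fun_prop), ← mul_assoc]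

/-- The product estimate `H^k · H^l ⊆ L²` for `d < 2 (k + l)`. -/
theorem lintegral_mul_sq_le_of_hasCompactSupport {k l : ℕ}
    (h : (Module.finrank ℝ V : ℝ) < 2 * (k + l)) :
    ∃ C : ℝ≥0∞, C ≠ ∞ ∧ ∀ f g : V → ℝ, ContDiff ℝ k f → HasCompactSupport f →
      ContDiff ℝ l g → HasCompactSupport g →
      ∫⁻ x, ‖f x * g x‖ₑ ^ 2 ≤ C * sobSum k f * sobSum l g := by
  obtain ⟨C, hC, h1⟩ := lintegral_conv_sq_le (V := V) h
  obtain ⟨A, hA, h2⟩ := lintegral_fourier_weight_le (V := V) k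
  obtain ⟨B, hB, h3⟩ := lintegral_fourier_weight_le (V := V) l
  refine ⟨C * A * B, by finiteness, fun f g hf hfc hg hgc => ?_⟩
  have hs : ∀ (m : ℕ) (u : V → ℝ), ContDiff ℝ m u →
      sobSum m (fun x => (u x : ℂ)) = sobSum m u := by
    intro m u hu
    refine Finset.sum_congr rfl fun i hi => lintegral_congr fun x => ?_
    have := Finset.mem_range.1 hi
    have h4 := Complex.ofRealLI.norm_iteratedFDeriv_comp_left (x := x) (i := i) (n := m)
      hu.contDiffAt (by norm_cast; omega)
    rw [← ofReal_norm, ← ofReal_norm, ← h4]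
    rfl
  have hf' : ContDiff ℝ k (fun x => (f x : ℂ)) := Complex.ofRealCLM.contDiff.comp hf
  have hg' : ContDiff ℝ l (fun x => (g x : ℂ)) := Complex.ofRealCLM.contDiff.comp hg
  have hfc' : HasCompactSupport (fun x => (f x : ℂ)) := hfc.comp_left Complex.ofReal_zero
  have hgc' : HasCompactSupport (fun x => (g x : ℂ)) := hgc.comp_left Complex.ofReal_zero
  calc ∫⁻ x, ‖f x * g x‖ₑ ^ 2 = ∫⁻ x, ‖(f x : ℂ) * (g x : ℂ)‖ₑ ^ 2 := by
        refine lintegral_congr fun x => ?_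
        rw [← Complex.ofReal_mul, ← ofReal_norm, ← ofReal_norm, Complex.norm_real]
    _ = ∫⁻ ξ, ‖𝓕 (fun x => (f x : ℂ) * (g x : ℂ)) ξ‖ₑ ^ 2 :=
        (lintegral_fourier_sq (hf'.continuous.mul hg'.continuous) hfc'.mul_right).symm
    _ ≤ ∫⁻ ξ, (∫⁻ η, ‖𝓕 (fun x => (f x : ℂ)) η‖ₑ * ‖𝓕 (fun x => (g x : ℂ)) (ξ - η)‖ₑ) ^ 2 := by
        refine lintegral_mono fun ξ => ?_
        dsimp only
        gcongr
        exact enorm_fourier_mul_le hf'.continuous hfc' hg'.continuous hgc' ξ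
    _ ≤ _ := h1 _ _ (continuous_fourier_cc hf'.continuous hfc').enorm.measurable
        (continuous_fourier_cc hg'.continuous hgc').enorm.measurable
    _ ≤ C * (A * sobSum k f) * (B * sobSum l g) := by
        gcongr
        · rw [← hs k f hf]; exact h2 _ hf' hfc'
        · rw [← hs l g hg]; exact h3 _ hg' hgc'
    _ = _ := by ring

end Product

/-! ### Localization to balls -/

section Localization

variable {V : Type*} [NormedAddCommGroup V] [InnerProductSpace ℝ V] [FiniteDimensional ℝ V]
  [MeasurableSpace V] [BorelSpace V]

/-- Multiplication by a fixed bump function `φ` bounds the global Sobolev norm by the Sobolev norm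
over the ball supporting `φ` (Leibniz formula). -/
theorem exists_sobSum_cutoff_le (φ : ContDiffBump (0 : V)) (k : ℕ) : ∃ C : ℝ≥0∞, C ≠ ∞ ∧
    ∀ u : V → ℝ, ContDiff ℝ k u → sobSum k (fun x => φ x * u x) ≤
      C * ∑ i ∈ Finset.range (k + 1), ∫⁻ x in Metric.closedBall 0 φ.rOut,
        ‖iteratedFDeriv ℝ i u x‖ₑ ^ 2 := by
  have hφ : ContDiff ℝ k φ := φ.contDiff
  have hM : ∀ i : ℕ, ∃ M : ℝ, ∀ x, i ≤ k → ‖iteratedFDeriv ℝ i φ x‖ ≤ M := by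
    intro i
    by_cases hi : i ≤ k
    · obtain ⟨M, hM⟩ := (φ.hasCompactSupport.iteratedFDeriv (𝕜 := ℝ) i).exists_bound_of_continuous
        (hφ.continuous_iteratedFDeriv (by exact_mod_cast hi))
      exact ⟨M, fun x _ => hM x⟩
    · exact ⟨0, fun x h => absurd h hi⟩
  choose M hM using hM
  set N : ℝ := ∑ i ∈ Finset.range (k + 1), |M i| with hN
  have hMN : ∀ i x, i ≤ k → ‖iteratedFDeriv ℝ i φ x‖ ≤ N := fun i x hi =>
    (hM i x hi).trans ((le_abs_self _).trans (Finset.single_le_sum (f := fun i => |M i|)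
      (fun _ _ => abs_nonneg _) (Finset.mem_range.2 (by omega))))
  have hN0 : 0 ≤ N := Finset.sum_nonneg fun _ _ => abs_nonneg _
  set D : ℝ := (2 ^ k * N) ^ 2 * (k + 1) with hD
  refine ⟨(k + 1 : ℕ) * ENNReal.ofReal D, by finiteness, fun u hu => ?_⟩
  have hreal : ∀ i ≤ k, ∀ x, ‖iteratedFDeriv ℝ i (fun x => φ x * u x) x‖ ^ 2 ≤
      D * ∑ j ∈ Finset.range (k + 1), ‖iteratedFDeriv ℝ j u x‖ ^ 2 := by
    intro i hi x
    have h1 : ‖iteratedFDeriv ℝ i (fun x => φ x * u x) x‖ ≤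
        (2 ^ k * N) * ∑ j ∈ Finset.range (k + 1), ‖iteratedFDeriv ℝ j u x‖ := by
      refine (norm_iteratedFDeriv_mul_le hφ hu x (by exact_mod_cast hi)).trans ?_
      rw [← Finset.sum_range_reflect]
      rw [Finset.mul_sum]
      refine le_trans (Finset.sum_le_sum (g := fun j => 2 ^ k * N * ‖iteratedFDeriv ℝ j u x‖)
        fun j hj => ?_)
        (Finset.sum_le_sum_of_subset_of_nonneg (Finset.range_mono (by omega))
          fun _ _ _ => by positivity)
      have hj' := Finset.mem_range.1 hj
      rw [show i - (i + 1 - 1 - j) = j by omega]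
      gcongr
      · calc ((i.choose (i + 1 - 1 - j) : ℕ) : ℝ) ≤ (2 ^ i : ℕ) := by
              exact_mod_cast Nat.choose_le_two_pow _ _
          _ ≤ 2 ^ k := by push_cast; gcongr; norm_num
      · exact hMN _ _ (by omega)
    calc _ ≤ ((2 ^ k * N) * ∑ j ∈ Finset.range (k + 1), ‖iteratedFDeriv ℝ j u x‖) ^ 2 := by
          gcongr
      _ ≤ (2 ^ k * N) ^ 2 * ((Finset.range (k + 1)).card *
            ∑ j ∈ Finset.range (k + 1), ‖iteratedFDeriv ℝ j u x‖ ^ 2) := by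
          rw [mul_pow]
          gcongr
          exact sq_sum_le_card_mul_sum_sq
      _ = _ := by rw [Finset.card_range, hD]; push_cast; ring
  have henn : ∀ i ≤ k, ∫⁻ x, ‖iteratedFDeriv ℝ i (fun x => φ x * u x) x‖ₑ ^ 2 ≤
      ENNReal.ofReal D * ∑ j ∈ Finset.range (k + 1), ∫⁻ x in Metric.closedBall 0 φ.rOut,
        ‖iteratedFDeriv ℝ j u x‖ₑ ^ 2 := by
    intro i hi
    have hsupp : Function.support (fun x => ‖iteratedFDeriv ℝ i (fun x => φ x * u x) x‖ₑ ^ 2) ⊆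
        Metric.closedBall 0 φ.rOut := by
      intro x hx
      -- Derivatives of `φ u` are supported in the topological support of `φ`.
      rw [← φ.tsupport_eq]
      have h1 : x ∈ Function.support (iteratedFDeriv ℝ i (fun x => φ x * u x)) := by
        intro h0
        apply hx
        show ‖_‖ₑ ^ 2 = 0
        rw [h0, ← ofReal_norm]
        simp
      exact closure_mono (Function.support_mul_subset_left _ _)
        (support_iteratedFDeriv_subset i h1)
    rw [← setLIntegral_eq_of_support_subset hsupp, ← lintegral_finsetSum', ← lintegral_const_mul']
    · refine lintegral_mono fun x => ?_
      have := ENNReal.ofReal_le_ofReal (hreal i hi x)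
      rw [ENNReal.ofReal_mul (by positivity), ENNReal.ofReal_sum_of_nonneg
        (by intros; positivity)] at this
      simpa only [ENNReal.ofReal_pow (norm_nonneg _), ofReal_norm] using this
    · finiteness
    · intro j hj
      exact (measurable_enorm_iteratedFDeriv_sq hu
        (by have := Finset.mem_range.1 hj; omega)).aemeasurable
  calc sobSum k (fun x => φ x * u x) ≤ ∑ i ∈ Finset.range (k + 1), ENNReal.ofReal D *
        ∑ j ∈ Finset.range (k + 1), ∫⁻ x in Metric.closedBall 0 φ.rOut,
        ‖iteratedFDeriv ℝ j u x‖ₑ ^ 2 :=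
        Finset.sum_le_sum fun i hi => henn i (by have := Finset.mem_range.1 hi; omega)
    _ = _ := by rw [Finset.sum_const, Finset.card_range, nsmul_eq_mul, mul_assoc]

theorem lintegral_ball_mul_sq_le {k l : ℕ} (h : (Module.finrank ℝ V : ℝ) < 2 * (k + l)) :
    ∃ C : ℝ≥0∞, C ≠ ∞ ∧ ∀ u v : V → ℝ, ContDiff ℝ k u → ContDiff ℝ l v →
      ∫⁻ x in Metric.closedBall 0 (1 / 2), ‖u x * v x‖ₑ ^ 2 ≤ C *
        (∑ i ∈ Finset.range (k + 1), ∫⁻ x in Metric.closedBall 0 1,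
          ‖iteratedFDeriv ℝ i u x‖ₑ ^ 2) *
        ∑ i ∈ Finset.range (l + 1), ∫⁻ x in Metric.closedBall 0 1,
          ‖iteratedFDeriv ℝ i v x‖ₑ ^ 2 := by
  let φ : ContDiffBump (0 : V) := ⟨1 / 2, 1, by norm_num, by norm_num⟩
  obtain ⟨C, hC, h1⟩ := lintegral_mul_sq_le_of_hasCompactSupport (V := V) h
  obtain ⟨A, hA, h2⟩ := exists_sobSum_cutoff_le φ k
  obtain ⟨B, hB, h3⟩ := exists_sobSum_cutoff_le φ l
  refine ⟨C * A * B, by finiteness, fun u v hu hv => ?_⟩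
  calc _ = ∫⁻ x in Metric.closedBall 0 (1 / 2), ‖(φ x * u x) * (φ x * v x)‖ₑ ^ 2 := by
        refine setLIntegral_congr_fun Metric.isClosed_closedBall.measurableSet fun x hx => ?_
        have : φ x = 1 := φ.one_of_mem_closedBall hx
        simp only [this, one_mul]
    _ ≤ ∫⁻ x, ‖(φ x * u x) * (φ x * v x)‖ₑ ^ 2 := setLIntegral_le_lintegral _ _
    _ ≤ C * sobSum k (fun x => φ x * u x) * sobSum l (fun x => φ x * v x) :=
        h1 _ _ (φ.contDiff.mul hu) φ.hasCompactSupport.mul_right (φ.contDiff.mul hv)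
          φ.hasCompactSupport.mul_right
    _ ≤ C * (A * _) * (B * _) := by gcongr; exacts [h2 u hu, h3 v hv]
    _ = _ := by ring

theorem lintegral_closedBall_comp_affine (y : V) {R : ℝ} (hR : 0 < R) (r : ℝ) (h : V → ℝ≥0∞) :
    ∫⁻ z in Metric.closedBall 0 r, h (y + R • z) =
      ENNReal.ofReal ((R ^ Module.finrank ℝ V)⁻¹) * ∫⁻ x in Metric.closedBall y (R * r), h x := by
  rw [← lintegral_indicator Metric.isClosed_closedBall.measurableSet,
    ← lintegral_indicator Metric.isClosed_closedBall.measurableSet]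
  have h1 : ∀ z, (Metric.closedBall (0 : V) r).indicator (fun z => h (y + R • z)) z =
      (Metric.closedBall y (R * r)).indicator h (y + R • z) := by
    intro z
    simp only [Set.indicator, Metric.mem_closedBall, dist_zero_right, dist_self_add_left, norm_smul,
      Real.norm_eq_abs, abs_of_pos hR]
    simp only [mul_le_mul_iff_right₀ hR]
  simp_rw [h1]
  set H := (Metric.closedBall y (R * r)).indicator h
  have h2 := (Homeomorph.smulOfNeZero R hR.ne' : V ≃ₜ V).measurableEmbedding.lintegral_map
    (μ := volume) (fun x => H (y + x))
  have h3 : Measure.map (Homeomorph.smulOfNeZero R hR.ne' : V ≃ₜ V) volume =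
      ENNReal.ofReal |(R ^ Module.finrank ℝ V)⁻¹| • (volume : Measure V) :=
    Measure.map_addHaar_smul volume hR.ne'
  rw [h3, lintegral_smul_measure, lintegral_add_left_eq_self, abs_of_pos (by positivity)] at h2
  simpa using h2.symm

/-- The product estimate on a ball of arbitrary centre and radius, with a constant independent of
both. -/
theorem lintegral_ball_scaled_mul_sq_le {k l : ℕ} (h : (Module.finrank ℝ V : ℝ) < 2 * (k + l)) :
    ∃ C : ℝ≥0∞, C ≠ ∞ ∧ ∀ u v : V → ℝ, ContDiff ℝ k u → ContDiff ℝ l v →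
      ∀ (y : V) (R : ℝ), 0 < R →
      ∫⁻ x in Metric.closedBall y (R / 2), ‖u x * v x‖ₑ ^ 2 ≤
        C * ENNReal.ofReal ((R ^ Module.finrank ℝ V)⁻¹) *
        (∑ i ∈ Finset.range (k + 1), ENNReal.ofReal (R ^ (2 * i)) *
          ∫⁻ x in Metric.closedBall y R, ‖iteratedFDeriv ℝ i u x‖ₑ ^ 2) *
        ∑ i ∈ Finset.range (l + 1), ENNReal.ofReal (R ^ (2 * i)) *
          ∫⁻ x in Metric.closedBall y R, ‖iteratedFDeriv ℝ i v x‖ₑ ^ 2 := by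
  obtain ⟨C, hC, h1⟩ := lintegral_ball_mul_sq_le (V := V) h
  refine ⟨C, hC, fun u v hu hv y R hR => ?_⟩
  have haff : ContDiff ℝ ((⊤ : ℕ∞) : WithTop ℕ∞) fun z : V => y + R • z := by fun_prop
  have h2 := h1 (fun z => u (y + R • z)) (fun z => v (y + R • z))
    (hu.comp (haff.of_le (by exact_mod_cast le_top)))
    (hv.comp (haff.of_le (by exact_mod_cast le_top)))
  rw [lintegral_closedBall_comp_affine y hR (1 / 2) (fun x => ‖u x * v x‖ₑ ^ 2), mul_one_div] at h2
  set P := ENNReal.ofReal ((R ^ Module.finrank ℝ V)⁻¹) with hP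
  have hP0 : P ≠ 0 := by rw [hP, ← pos_iff_ne_zero, ENNReal.ofReal_pos]; positivity
  have hPt : P ≠ ∞ := ENNReal.ofReal_ne_top
  have key : ∀ (m : ℕ) (w : V → ℝ), ContDiff ℝ m w →
      (∑ i ∈ Finset.range (m + 1), ∫⁻ x in Metric.closedBall 0 1,
          ‖iteratedFDeriv ℝ i (fun z => w (y + R • z)) x‖ₑ ^ 2) ≤
      P * ∑ i ∈ Finset.range (m + 1), ENNReal.ofReal (R ^ (2 * i)) *
          ∫⁻ x in Metric.closedBall y R, ‖iteratedFDeriv ℝ i w x‖ₑ ^ 2 := by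
    intro m w hw
    rw [Finset.mul_sum]
    refine Finset.sum_le_sum fun i hi => ?_
    have hi' : i ≤ m := by have := Finset.mem_range.1 hi; omega
    refine (lintegral_mono fun z => enorm_iteratedFDeriv_comp_affine_le hw hi' y hR z).trans ?_
    rw [lintegral_const_mul' _ _ ENNReal.ofReal_ne_top,
      lintegral_closedBall_comp_affine y hR 1 (fun x => ‖iteratedFDeriv ℝ i w x‖ₑ ^ 2), mul_one]
    apply le_of_eq
    ring
  have h3 := h2.trans (mul_le_mul' (mul_le_mul' le_rfl (key k u hu)) (key l v hv))
  rw [← ENNReal.mul_le_mul_iff_right hP0 hPt]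
  refine h3.trans (le_of_eq ?_)
  ring

end Localization

/-! ### Weighted L² estimate for a product -/

section Weighted

variable {V : Type*} [NormedAddCommGroup V] [InnerProductSpace ℝ V] [FiniteDimensional ℝ V]
  [MeasurableSpace V] [BorelSpace V]

/-- The mass `⟨x⟩^(-d)` is exactly what makes balls of radius proportional to `⟨x⟩` have constant
size. -/
theorem wt_mul_volume_closedBall (x : V) {a : ℝ} (ha : 0 ≤ a) :
    wt (-(Module.finrank ℝ V : ℝ) / 2) x *
      volume (Metric.closedBall x (a * √(1 + ‖x‖ ^ 2))) =
    ENNReal.ofReal (a ^ Module.finrank ℝ V) * volume (Metric.ball (0 : V) 1) := by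
  rw [Measure.addHaar_closedBall _ _ (by positivity), ← mul_assoc, wt,
    ← ENNReal.ofReal_mul (by positivity)]
  congr 2
  have hq : 0 < 1 + ‖x‖ ^ 2 := by positivity
  rw [mul_pow, Real.sqrt_eq_rpow, ← Real.rpow_natCast (_ ^ _), ← Real.rpow_mul hq.le,
    mul_left_comm, ← Real.rpow_add hq,
    show -(Module.finrank ℝ V : ℝ) / 2 + 1 / 2 * (Module.finrank ℝ V : ℝ) = 0 by ring,
    Real.rpow_zero, mul_one]

/-- Tonelli's theorem for integrals over balls whose radius depends on the centre. -/
theorem lintegral_centers_swap {κ h : V → ℝ≥0∞} (hκ : Measurable κ) (hh : Measurable h)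
    {r : V → ℝ} (hr : Measurable r) :
    ∫⁻ y, κ y * ∫⁻ x in Metric.closedBall y (r y), h x =
      ∫⁻ x, h x * ∫⁻ y in {y | dist x y ≤ r y}, κ y := by
  have hS : MeasurableSet {p : V × V | dist p.1 p.2 ≤ r p.2} :=
    measurableSet_le (by fun_prop) (by fun_prop)
  have hT : ∀ x, MeasurableSet {y | dist x y ≤ r y} := fun x =>
    measurableSet_le (by fun_prop) hr
  have e1 : ∀ y, κ y * ∫⁻ x in Metric.closedBall y (r y), h x =
      ∫⁻ x, {p : V × V | dist p.1 p.2 ≤ r p.2}.indicator (fun p => h p.1 * κ p.2) (x, y) := by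
    intro y
    rw [← lintegral_indicator Metric.isClosed_closedBall.measurableSet,
      ← lintegral_const_mul _ (hh.indicator Metric.isClosed_closedBall.measurableSet)]
    refine lintegral_congr fun x => ?_
    simp only [Set.indicator, Metric.mem_closedBall, Set.mem_ofPred_eq]
    split_ifs <;> ring
  have e2 : ∀ x, h x * ∫⁻ y in {y | dist x y ≤ r y}, κ y =
      ∫⁻ y, {p : V × V | dist p.1 p.2 ≤ r p.2}.indicator (fun p => h p.1 * κ p.2) (x, y) := by
    intro x
    rw [← lintegral_indicator (hT x), ← lintegral_const_mul _ (hκ.indicator (hT x))]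
    refine lintegral_congr fun y => ?_
    simp only [Set.indicator, Set.mem_ofPred_eq]
    split_ifs <;> simp
  simp_rw [e1, e2]
  refine lintegral_lintegral_swap (f := fun y x => _) (Measurable.aemeasurable ?_)
  have : Measurable ({p : V × V | dist p.1 p.2 ≤ r p.2}.indicator (fun p => h p.1 * κ p.2)) :=
    ((hh.comp measurable_fst).mul (hκ.comp measurable_snd)).indicator hS
  exact this.comp measurable_swap

/-- The balls of radius `⟨y⟩ / 4`, taken with density `⟨y⟩^(-d) dy`, cover every point `x` with mass
bounded below: every `y` within `⟨x⟩ / 8` of `x` contributes. -/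
theorem lintegral_le_lintegral_centers : ∃ C : ℝ≥0∞, C ≠ ∞ ∧ ∀ h : V → ℝ≥0∞, Measurable h →
    ∫⁻ x, h x ≤ C * ∫⁻ y, wt (-(Module.finrank ℝ V : ℝ) / 2) y *
      ∫⁻ x in Metric.closedBall y (√(1 + ‖y‖ ^ 2) / 2 / 2), h x := by
  set t : ℝ := -(Module.finrank ℝ V : ℝ) / 2 with ht
  set c : ℝ≥0∞ := ENNReal.ofReal ((1 / 8) ^ Module.finrank ℝ V) * volume (Metric.ball (0 : V) 1)
    with hc
  have hc0 : c ≠ 0 := by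
    refine mul_ne_zero ?_ (Metric.measure_ball_pos volume _ one_pos).ne'
    rw [← pos_iff_ne_zero, ENNReal.ofReal_pos]; positivity
  have hct : c ≠ ∞ := ENNReal.mul_ne_top ENNReal.ofReal_ne_top measure_ball_lt_top.ne
  set M := ENNReal.ofReal (4 ^ |t|) with hM
  refine ⟨c⁻¹ * M, ENNReal.mul_ne_top (ENNReal.inv_ne_top.2 hc0) ENNReal.ofReal_ne_top,
    fun h hh => ?_⟩
  rw [lintegral_centers_swap (measurable_wt t) hh (by fun_prop),
    ← lintegral_const_mul' _ _
      (ENNReal.mul_ne_top (ENNReal.inv_ne_top.2 hc0) ENNReal.ofReal_ne_top)]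
  refine lintegral_mono fun x => ?_
  have key : c ≤ M * ∫⁻ y in {y | dist x y ≤ √(1 + ‖y‖ ^ 2) / 2 / 2}, wt t y := by
    rw [hc, ← wt_mul_volume_closedBall x (by norm_num), ← ht, ← setLIntegral_const,
      ← lintegral_const_mul' _ _ ENNReal.ofReal_ne_top]
    have hcomp : ∀ y ∈ Metric.closedBall x (1 / 8 * √(1 + ‖x‖ ^ 2)),
        1 + ‖y‖ ^ 2 ≤ 4 * (1 + ‖x‖ ^ 2) ∧ 1 + ‖x‖ ^ 2 ≤ 4 * (1 + ‖y‖ ^ 2) := by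
      intro y hy
      rw [Metric.mem_closedBall] at hy
      exact comparable_of_dist_le (hy.trans (by linarith [Real.sqrt_nonneg (1 + ‖x‖ ^ 2)]))
    refine (setLIntegral_mono' Metric.isClosed_closedBall.measurableSet fun y hy =>
      wt_le_of_comparable t (hcomp y hy).2 (hcomp y hy).1).trans ?_
    refine lintegral_mono_set fun y hy => ?_
    have h1 : √(1 + ‖x‖ ^ 2) ≤ 2 * √(1 + ‖y‖ ^ 2) := by
      rw [Real.sqrt_le_left (by positivity), mul_pow, Real.sq_sqrt (by positivity)]
      linarith [(hcomp y hy).2]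
    rw [Metric.mem_closedBall, dist_comm] at hy
    show dist x y ≤ _
    linarith
  calc h x = c⁻¹ * c * h x := by rw [ENNReal.inv_mul_cancel hc0 hct, one_mul]
    _ ≤ c⁻¹ * (M * ∫⁻ y in {y | dist x y ≤ √(1 + ‖y‖ ^ 2) / 2 / 2}, wt t y) * h x := by gcongr
    _ = _ := by ring

/-- The balls of radius `⟨y⟩ / 2`, taken with density `⟨y⟩^(-d) dy`, cover every point `x` with mass
bounded above: only `y` within `⟨x⟩` of `x` contribute. -/
theorem lintegral_centers_le : ∃ C : ℝ≥0∞, C ≠ ∞ ∧ ∀ h : V → ℝ≥0∞, Measurable h →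
    ∫⁻ y, wt (-(Module.finrank ℝ V : ℝ) / 2) y *
      ∫⁻ x in Metric.closedBall y (√(1 + ‖y‖ ^ 2) / 2), h x ≤ C * ∫⁻ x, h x := by
  set t : ℝ := -(Module.finrank ℝ V : ℝ) / 2 with ht
  set c : ℝ≥0∞ := ENNReal.ofReal (1 ^ Module.finrank ℝ V) * volume (Metric.ball (0 : V) 1)
    with hc
  have hct : c ≠ ∞ := ENNReal.mul_ne_top ENNReal.ofReal_ne_top measure_ball_lt_top.ne
  set M := ENNReal.ofReal (4 ^ |t|) with hM
  have hMc : M * c ≠ ∞ := ENNReal.mul_ne_top ENNReal.ofReal_ne_top hct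
  refine ⟨M * c, hMc, fun h hh => ?_⟩
  rw [lintegral_centers_swap (measurable_wt t) hh (by fun_prop), ← lintegral_const_mul' _ _ hMc]
  refine lintegral_mono fun x => ?_
  have key : ∫⁻ y in {y | dist x y ≤ √(1 + ‖y‖ ^ 2) / 2}, wt t y ≤ M * c := by
    rw [hc, ← wt_mul_volume_closedBall x (by norm_num), ← ht, ← setLIntegral_const,
      ← lintegral_const_mul' _ _ ENNReal.ofReal_ne_top]
    refine (setLIntegral_mono' (measurableSet_le (by fun_prop) (by fun_prop)) fun y hy =>
      wt_le_of_comparable t (comparable_of_dist_le hy).2 (comparable_of_dist_le hy).1).trans ?_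
    refine lintegral_mono_set fun y hy => ?_
    have h1 : √(1 + ‖y‖ ^ 2) ≤ 2 * √(1 + ‖x‖ ^ 2) := by
      rw [Real.sqrt_le_left (by positivity), mul_pow, Real.sq_sqrt (by positivity)]
      linarith [(comparable_of_dist_le hy).2]
    have h2 : dist x y ≤ √(1 + ‖y‖ ^ 2) / 2 := hy
    rw [Metric.mem_closedBall, dist_comm]
    linarith
  rw [mul_comm]
  gcongr

/-- The square of the `H_{s,δ}`-norm, as an extended nonnegative real. It is `∞` when the norm is not
finite. -/
noncomputable def wSob {F : Type*} [NormedAddCommGroup F] [NormedSpace ℝ F]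
    (s : ℕ) (δ : ℝ) (u : V → F) : ℝ≥0∞ :=
  ∑ m ∈ Finset.range (s + 1), ∫⁻ x, ‖iteratedFDeriv ℝ m u x‖ₑ ^ 2 * wt (m + δ) x

/-- On the ball of radius `R = ⟨y⟩ / 2` about `y` the squared scale-invariant Sobolev norm, multiplied
by the weight at the centre, is bounded by the squared local `H_{k,δ}`-norm. -/
theorem wt_mul_local_sum_le (k : ℕ) (δ : ℝ) {u : V → ℝ} (hu : ContDiff ℝ k u) (y : V) :
    wt δ y * (∑ i ∈ Finset.range (k + 1), ENNReal.ofReal ((√(1 + ‖y‖ ^ 2) / 2) ^ (2 * i)) *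
      ∫⁻ x in Metric.closedBall y (√(1 + ‖y‖ ^ 2) / 2), ‖iteratedFDeriv ℝ i u x‖ₑ ^ 2) ≤
    ENNReal.ofReal (4 ^ (k + |δ|)) * ∫⁻ x in Metric.closedBall y (√(1 + ‖y‖ ^ 2) / 2),
      ∑ i ∈ Finset.range (k + 1), ‖iteratedFDeriv ℝ i u x‖ₑ ^ 2 * wt (i + δ) x := by
  have hmi : ∀ i ∈ Finset.range (k + 1), Measurable fun x => ‖iteratedFDeriv ℝ i u x‖ₑ ^ 2 :=
    fun i hi => measurable_enorm_iteratedFDeriv_sq hu (by have := Finset.mem_range.1 hi; omega)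
  have hsum := lintegral_finsetSum
    (μ := volume.restrict (Metric.closedBall y (√(1 + ‖y‖ ^ 2) / 2))) (Finset.range (k + 1))
    (f := fun i x => ‖iteratedFDeriv ℝ i u x‖ₑ ^ 2 * wt (i + δ) x)
    fun i hi => (hmi i hi).mul (measurable_wt _)
  rw [hsum, Finset.mul_sum, Finset.mul_sum]
  refine Finset.sum_le_sum fun i hi => ?_
  have hik : i ≤ k := by have := Finset.mem_range.1 hi; omega
  have h1 : ENNReal.ofReal ((√(1 + ‖y‖ ^ 2) / 2) ^ (2 * i)) ≤ wt i y := by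
    unfold wt
    rw [pow_mul, div_pow, Real.sq_sqrt (by positivity), Real.rpow_natCast]
    refine ENNReal.ofReal_le_ofReal ?_
    gcongr
    linarith [sq_nonneg ‖y‖]
  rw [← mul_assoc, ← lintegral_const_mul' _ _ ENNReal.ofReal_ne_top]
  calc _ ≤ wt (i + δ) y * _ := by
        rw [wt_add, mul_comm (wt (i : ℝ) y)]
        gcongr
    _ ≤ _ := by
        rw [← lintegral_const_mul _ (hmi i hi)]
        refine setLIntegral_mono' Metric.isClosed_closedBall.measurableSet fun x hx => ?_
        have hc := comparable_of_dist_le (Metric.mem_closedBall.1 hx)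
        have h2 := wt_le_of_comparable (i + δ) hc.2 hc.1
        have h3 : ENNReal.ofReal (4 ^ |(i : ℝ) + δ|) ≤ ENNReal.ofReal (4 ^ (k + |δ|)) := by
          refine ENNReal.ofReal_le_ofReal (Real.rpow_le_rpow_of_exponent_le (by norm_num) ?_)
          refine (abs_add_le _ _).trans ?_
          rw [Nat.abs_cast]
          gcongr
        calc _ ≤ (ENNReal.ofReal (4 ^ (k + |δ|)) * wt (i + δ) x) *
              ‖iteratedFDeriv ℝ i u x‖ₑ ^ 2 := by
              gcongr
              exact h2.trans (by gcongr)
          _ = _ := by ring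

/-- The weighted product estimate without derivatives on the product. -/
theorem lintegral_mul_sq_wt_le {k l : ℕ} (h : (Module.finrank ℝ V : ℝ) < 2 * (k + l))
    {δ δ₁ δ₂ : ℝ} (hδ : δ ≤ δ₁ + δ₂ + (Module.finrank ℝ V : ℝ) / 2) :
    ∃ C : ℝ≥0∞, C ≠ ∞ ∧ ∀ u v : V → ℝ, ContDiff ℝ k u → ContDiff ℝ l v →
      ∫⁻ x, ‖u x * v x‖ₑ ^ 2 * wt δ x ≤ C * wSob k δ₁ u * wSob l δ₂ v := by
  set d := Module.finrank ℝ V with hd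
  obtain ⟨C, hC, hloc⟩ := lintegral_ball_scaled_mul_sq_le (V := V) h
  obtain ⟨A, hA, hlow⟩ := lintegral_le_lintegral_centers (V := V)
  obtain ⟨B, hB, hup⟩ := lintegral_centers_le (V := V)
  rw [← hd] at hlow hup
  set M := ENNReal.ofReal (4 ^ |δ|) with hM
  set M₁ := ENNReal.ofReal (4 ^ (k + |δ₁|)) with hM₁
  set M₂ := ENNReal.ofReal (4 ^ (l + |δ₂|)) with hM₂
  set K := M * C * 2 ^ d * M₁ * M₂ with hK
  have hKt : K ≠ ∞ := by rw [hK, hM, hM₁, hM₂]; finiteness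
  refine ⟨A * K * B, by finiteness, fun u v hu hv => ?_⟩
  have hmeas : ∀ (m : ℕ) (ε : ℝ) (w : V → ℝ), ContDiff ℝ m w → ∀ i ∈ Finset.range (m + 1),
      Measurable fun x => ‖iteratedFDeriv ℝ i w x‖ₑ ^ 2 * wt (i + ε) x := fun m ε w hw i hi =>
    (measurable_enorm_iteratedFDeriv_sq hw
      (by have := Finset.mem_range.1 hi; omega)).mul (measurable_wt _)
  set Hu : V → ℝ≥0∞ := fun x =>
    ∑ i ∈ Finset.range (k + 1), ‖iteratedFDeriv ℝ i u x‖ₑ ^ 2 * wt (i + δ₁) x with hHu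
  set Hv : V → ℝ≥0∞ := fun x =>
    ∑ i ∈ Finset.range (l + 1), ‖iteratedFDeriv ℝ i v x‖ₑ ^ 2 * wt (i + δ₂) x with hHv
  have hHum : Measurable Hu := Finset.measurable_fun_sum _ (hmeas k δ₁ u hu)
  have hHvm : Measurable Hv := Finset.measurable_fun_sum _ (hmeas l δ₂ v hv)
  have hIu : ∫⁻ x, Hu x = wSob k δ₁ u := lintegral_finsetSum _ (hmeas k δ₁ u hu)
  have hIv : ∫⁻ x, Hv x = wSob l δ₂ v := lintegral_finsetSum _ (hmeas l δ₂ v hv)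
  have huv : Measurable fun x => ‖u x * v x‖ₑ ^ 2 :=
    (hu.continuous.mul hv.continuous).enorm.measurable.pow_const 2
  have hball : ∀ y, ∫⁻ x in Metric.closedBall y (√(1 + ‖y‖ ^ 2) / 2 / 2),
      ‖u x * v x‖ₑ ^ 2 * wt δ x ≤
      K * wSob k δ₁ u * ∫⁻ x in Metric.closedBall y (√(1 + ‖y‖ ^ 2) / 2), Hv x := by
    intro y
    have hR : 0 < √(1 + ‖y‖ ^ 2) / 2 := by positivity
    have hw : wt δ y * ENNReal.ofReal (((√(1 + ‖y‖ ^ 2) / 2) ^ d)⁻¹) ≤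
        2 ^ d * (wt δ₁ y * wt δ₂ y) := by
      have e : ENNReal.ofReal (((√(1 + ‖y‖ ^ 2) / 2) ^ d)⁻¹) = 2 ^ d * wt (-(d : ℝ) / 2) y := by
        unfold wt
        have hq : 0 < 1 + ‖y‖ ^ 2 := by positivity
        rw [show (2 : ℝ≥0∞) ^ d = ENNReal.ofReal (2 ^ d) by
          rw [ENNReal.ofReal_pow (by norm_num)]; norm_num, ← ENNReal.ofReal_mul (by positivity)]
        congr 1
        rw [div_pow, inv_div, Real.sqrt_eq_rpow, ← Real.rpow_natCast (_ ^ _),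
          ← Real.rpow_mul hq.le, div_eq_mul_inv, ← Real.rpow_neg hq.le]
        congr 2
        ring
      rw [e, mul_left_comm, ← wt_add, ← wt_add]
      gcongr
      exact wt_mono (by linarith) y
    have hSu := wt_mul_local_sum_le k δ₁ hu y
    have hSv := wt_mul_local_sum_le l δ₂ hv y
    have hl := hloc u v hu hv y _ hR
    rw [← hd] at hl
    rw [← hM₁] at hSu
    rw [← hM₂] at hSv
    set Su := ∑ i ∈ Finset.range (k + 1), ENNReal.ofReal ((√(1 + ‖y‖ ^ 2) / 2) ^ (2 * i)) *
      ∫⁻ x in Metric.closedBall y (√(1 + ‖y‖ ^ 2) / 2), ‖iteratedFDeriv ℝ i u x‖ₑ ^ 2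
    set Sv := ∑ i ∈ Finset.range (l + 1), ENNReal.ofReal ((√(1 + ‖y‖ ^ 2) / 2) ^ (2 * i)) *
      ∫⁻ x in Metric.closedBall y (√(1 + ‖y‖ ^ 2) / 2), ‖iteratedFDeriv ℝ i v x‖ₑ ^ 2
    calc _ ≤ ∫⁻ x in Metric.closedBall y (√(1 + ‖y‖ ^ 2) / 2 / 2),
          M * wt δ y * ‖u x * v x‖ₑ ^ 2 := by
          refine setLIntegral_mono' Metric.isClosed_closedBall.measurableSet fun x hx => ?_
          have hc := comparable_of_dist_le ((Metric.mem_closedBall.1 hx).trans (by linarith))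
          rw [mul_comm]
          gcongr
          exact wt_le_of_comparable δ hc.1 hc.2
      _ = M * wt δ y * ∫⁻ x in Metric.closedBall y (√(1 + ‖y‖ ^ 2) / 2 / 2),
          ‖u x * v x‖ₑ ^ 2 := lintegral_const_mul _ huv
      _ ≤ M * wt δ y * (C * ENNReal.ofReal (((√(1 + ‖y‖ ^ 2) / 2) ^ d)⁻¹) * Su * Sv) := by gcongr
      _ = M * C * (wt δ y * ENNReal.ofReal (((√(1 + ‖y‖ ^ 2) / 2) ^ d)⁻¹)) * Su * Sv := by ring
      _ ≤ M * C * (2 ^ d * (wt δ₁ y * wt δ₂ y)) * Su * Sv := by gcongr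
      _ = M * C * 2 ^ d * (wt δ₁ y * Su) * (wt δ₂ y * Sv) := by ring
      _ ≤ M * C * 2 ^ d *
            (M₁ * ∫⁻ x in Metric.closedBall y (√(1 + ‖y‖ ^ 2) / 2), Hu x) *
            (M₂ * ∫⁻ x in Metric.closedBall y (√(1 + ‖y‖ ^ 2) / 2), Hv x) := by
          gcongr
      -- Only the factor of `v` stays local.
      _ ≤ M * C * 2 ^ d * (M₁ * wSob k δ₁ u) *
            (M₂ * ∫⁻ x in Metric.closedBall y (√(1 + ‖y‖ ^ 2) / 2), Hv x) := by
          gcongr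
          rw [← hIu]
          exact setLIntegral_le_lintegral _ _
      _ = _ := by ring
  calc _ ≤ A * _ := hlow _ (huv.mul (measurable_wt δ))
    _ ≤ A * ∫⁻ y, wt (-(d : ℝ) / 2) y *
          ∫⁻ x in Metric.closedBall y (√(1 + ‖y‖ ^ 2) / 2), K * wSob k δ₁ u * Hv x := by
        refine mul_le_mul' le_rfl (lintegral_mono fun y => mul_le_mul' le_rfl ?_)
        rw [lintegral_const_mul _ hHvm]
        exact hball y
    _ ≤ A * (B * ∫⁻ x, K * wSob k δ₁ u * Hv x) := by
        gcongr
        exact hup _ (hHvm.const_mul _)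
    _ = _ := by rw [lintegral_const_mul _ hHvm, hIv]; ring

end Weighted

/-! ### Higher derivatives of a product -/

section Leibniz

variable {V : Type*} [NormedAddCommGroup V] [InnerProductSpace ℝ V] [FiniteDimensional ℝ V]
  [MeasurableSpace V] [BorelSpace V]

theorem wSob_zero (δ : ℝ) (w : V → ℝ) : wSob 0 δ w = ∫⁻ x, ‖w x‖ₑ ^ 2 * wt δ x := by
  simp only [wSob, zero_add, Finset.sum_range_one, Nat.cast_zero]
  refine lintegral_congr fun x => ?_
  rw [← ofReal_norm, ← ofReal_norm, norm_iteratedFDeriv_zero]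

theorem wSob_dirDeriv_le {s : ℕ} {δ : ℝ} {f : V → ℝ} (hf : ContDiff ℝ (s + 1 : ℕ) f) (v : V)
    (hv : ‖v‖ ≤ 1) : wSob s (δ + 1) (fun y => fderiv ℝ f y v) ≤ wSob (s + 1) δ f := by
  unfold wSob
  rw [Finset.sum_range_succ' _ (s + 1)]
  refine le_trans (Finset.sum_le_sum fun i hi => ?_) le_self_add
  refine lintegral_mono fun x => ?_
  rw [show (i : ℝ) + (δ + 1) = ((i + 1 : ℕ) : ℝ) + δ by push_cast; ring]
  dsimp only
  gcongr
  refine enorm_iteratedFDeriv_dirDeriv_le (hf.of_le ?_) v hv x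
  have := Finset.mem_range.1 hi
  norm_cast

theorem wSob_add_le {s : ℕ} (δ : ℝ) {f g : V → ℝ} (hf : ContDiff ℝ s f) (hg : ContDiff ℝ s g) :
    wSob s δ (fun x => f x + g x) ≤ 2 * (wSob s δ f + wSob s δ g) := by
  unfold wSob
  rw [← Finset.sum_add_distrib, Finset.mul_sum]
  refine Finset.sum_le_sum fun i hi => ?_
  have hi' : i ≤ s := by have := Finset.mem_range.1 hi; omega
  have hsum := lintegral_add_left (μ := volume)
    (f := fun x => ‖iteratedFDeriv ℝ i f x‖ₑ ^ 2 * wt (i + δ) x)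
    ((measurable_enorm_iteratedFDeriv_sq hf hi').mul (measurable_wt _))
    (fun x => ‖iteratedFDeriv ℝ i g x‖ₑ ^ 2 * wt (i + δ) x)
  rw [← hsum, ← lintegral_const_mul' _ _ (by norm_num)]
  refine lintegral_mono fun x => ?_
  have hin : (i : WithTop ℕ∞) ≤ (s : WithTop ℕ∞) := by exact_mod_cast hi'
  have h1 : iteratedFDeriv ℝ i (fun x => f x + g x) x =
      iteratedFDeriv ℝ i f x + iteratedFDeriv ℝ i g x :=
    iteratedFDeriv_add_apply (hf.of_le hin).contDiffAt (hg.of_le hin).contDiffAt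
  have h2 : ‖iteratedFDeriv ℝ i (fun x => f x + g x) x‖ ^ 2 ≤
      2 * (‖iteratedFDeriv ℝ i f x‖ ^ 2 + ‖iteratedFDeriv ℝ i g x‖ ^ 2) := by
    rw [h1]
    refine (pow_le_pow_left₀ (norm_nonneg _) (norm_add_le _ _) 2).trans ?_
    nlinarith [sq_nonneg (‖iteratedFDeriv ℝ i f x‖ - ‖iteratedFDeriv ℝ i g x‖)]
  have h3 := ENNReal.ofReal_le_ofReal h2
  rw [ENNReal.ofReal_mul (by norm_num), ENNReal.ofReal_add (by positivity) (by positivity)] at h3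
  simp only [ENNReal.ofReal_pow (norm_nonneg _), ofReal_norm, ENNReal.ofReal_ofNat] at h3
  rw [← add_mul, ← mul_assoc]
  dsimp only
  gcongr

theorem wSob_succ_le {s : ℕ} (δ : ℝ) {f : V → ℝ} (hf : ContDiff ℝ (s + 1 : ℕ) f) :
    wSob (s + 1) δ f ≤ wSob 0 δ f + (Module.finrank ℝ V) *
      ∑ j, wSob s (δ + 1) (fun y => fderiv ℝ f y (stdOrthonormalBasis ℝ V j)) := by
  have hd : ∀ v : V, ContDiff ℝ s (fun y => fderiv ℝ f y v) := fun v =>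
    (hf.fderiv_right (m := s) (by norm_cast)).clm_apply contDiff_const
  unfold wSob
  rw [Finset.sum_range_succ' _ (s + 1), add_comm, Finset.sum_comm, Finset.mul_sum]
  simp only [zero_add, Finset.sum_range_one]
  gcongr with i hi
  have hi' : i ≤ s := by have := Finset.mem_range.1 hi; omega
  have hm := fun j (_ : j ∈ Finset.univ) =>
    (measurable_enorm_iteratedFDeriv_sq (hd (stdOrthonormalBasis ℝ V j)) hi').mul
      (measurable_wt (i + (δ + 1)))
  have hsum := lintegral_finsetSum (μ := volume) Finset.univ (f := fun j x =>
    ‖iteratedFDeriv ℝ i (fun y => fderiv ℝ f y (stdOrthonormalBasis ℝ V j)) x‖ₑ ^ 2 *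
      wt (i + (δ + 1)) x) hm
  rw [← hsum, ← lintegral_const_mul' _ _ (by finiteness)]
  refine lintegral_mono fun x => ?_
  rw [show (i : ℝ) + (δ + 1) = ((i + 1 : ℕ) : ℝ) + δ by push_cast; ring]
  dsimp only
  rw [← Finset.sum_mul, ← mul_assoc]
  gcongr
  exact enorm_iteratedFDeriv_succ_sq_le (hf.of_le (by norm_cast; omega)) x

/-- The multiplication property for `wSob`, with the endpoint `δ = δ₁ + δ₂ + d / 2` included. -/
theorem wSob_mul_le (s : ℕ) : ∀ {s₁ s₂ : ℕ} {δ δ₁ δ₂ : ℝ}, s ≤ s₁ → s ≤ s₂ →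
    (Module.finrank ℝ V : ℝ) < 2 * (s₁ + s₂ - s) →
    δ ≤ δ₁ + δ₂ + (Module.finrank ℝ V : ℝ) / 2 →
    ∃ C : ℝ≥0∞, C ≠ ∞ ∧ ∀ u v : V → ℝ, ContDiff ℝ s₁ u → ContDiff ℝ s₂ v →
      wSob s δ (fun x => u x * v x) ≤ C * wSob s₁ δ₁ u * wSob s₂ δ₂ v := by
  induction s with
  | zero =>
    intro s₁ s₂ δ δ₁ δ₂ _ _ h hδ
    obtain ⟨C, hC, h1⟩ := lintegral_mul_sq_wt_le (V := V) (k := s₁) (l := s₂)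
      (by simpa using h) hδ
    exact ⟨C, hC, fun u v hu hv => by rw [wSob_zero]; exact h1 u v hu hv⟩
  | succ s ih =>
    intro s₁ s₂ δ δ₁ δ₂ h₁ h₂ h hδ
    obtain ⟨s₁, rfl⟩ : ∃ t, s₁ = t + 1 := ⟨s₁ - 1, by omega⟩
    obtain ⟨s₂, rfl⟩ : ∃ t, s₂ = t + 1 := ⟨s₂ - 1, by omega⟩
    push_cast at h
    obtain ⟨A, hA, hA'⟩ := lintegral_mul_sq_wt_le (V := V) (k := s₁ + 1) (l := s₂ + 1)
      (by push_cast; linarith [(Nat.cast_nonneg s : (0 : ℝ) ≤ s)]) hδ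
    obtain ⟨B, hB, hB'⟩ := ih (s₁ := s₁) (s₂ := s₂ + 1) (δ := δ + 1) (δ₁ := δ₁ + 1) (δ₂ := δ₂)
      (by omega) (by omega) (by push_cast; linarith) (by linarith)
    obtain ⟨D, hD, hD'⟩ := ih (s₁ := s₁ + 1) (s₂ := s₂) (δ := δ + 1) (δ₁ := δ₁) (δ₂ := δ₂ + 1)
      (by omega) (by omega) (by push_cast; linarith) (by linarith)
    set d := Module.finrank ℝ V with hd
    refine ⟨A + d * (d * (2 * (B + D))), by finiteness, fun u v hu hv => ?_⟩
    have huv : ContDiff ℝ (s + 1 : ℕ) (fun x => u x * v x) :=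
      (hu.of_le (by exact_mod_cast h₁)).mul (hv.of_le (by exact_mod_cast h₂))
    refine (wSob_succ_le δ huv).trans ?_
    have hj : ∀ j, wSob s (δ + 1) (fun y => fderiv ℝ (fun x => u x * v x) y
        (stdOrthonormalBasis ℝ V j)) ≤
        2 * (B + D) * wSob (s₁ + 1) δ₁ u * wSob (s₂ + 1) δ₂ v := by
      intro j
      set e := stdOrthonormalBasis ℝ V j with he
      have he1 : ‖e‖ ≤ 1 := ((stdOrthonormalBasis ℝ V).norm_eq_one j).le
      have hdu : ContDiff ℝ s₁ (fun y => fderiv ℝ u y e) :=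
        (hu.fderiv_right (m := s₁) (by norm_cast)).clm_apply contDiff_const
      have hdv : ContDiff ℝ s₂ (fun y => fderiv ℝ v y e) :=
        (hv.fderiv_right (m := s₂) (by norm_cast)).clm_apply contDiff_const
      have hder : (fun y => fderiv ℝ (fun x => u x * v x) y e) =
          fun y => fderiv ℝ u y e * v y + u y * fderiv ℝ v y e := by
        ext y
        rw [fderiv_fun_mul (hu.differentiable (by norm_cast) y)
          (hv.differentiable (by norm_cast) y)]
        simp only [add_apply, smul_apply, smul_eq_mul]
        ring
      rw [hder]
      refine (wSob_add_le (δ + 1)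
        ((hdu.of_le (by norm_cast; omega)).mul (hv.of_le (by norm_cast; omega)))
        ((hu.of_le (by norm_cast; omega)).mul (hdv.of_le (by norm_cast; omega)))).trans ?_
      calc _ ≤ 2 * (B * wSob s₁ (δ₁ + 1) (fun y => fderiv ℝ u y e) * wSob (s₂ + 1) δ₂ v +
            D * wSob (s₁ + 1) δ₁ u * wSob s₂ (δ₂ + 1) (fun y => fderiv ℝ v y e)) := by
            gcongr
            · exact hB' _ _ hdu hv
            · exact hD' _ _ hu hdv
        _ ≤ 2 * (B * wSob (s₁ + 1) δ₁ u * wSob (s₂ + 1) δ₂ v +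
            D * wSob (s₁ + 1) δ₁ u * wSob (s₂ + 1) δ₂ v) := by
            gcongr
            · exact wSob_dirDeriv_le hu e he1
            · exact wSob_dirDeriv_le hv e he1
        _ = _ := by ring
    calc _ ≤ A * wSob (s₁ + 1) δ₁ u * wSob (s₂ + 1) δ₂ v + d *
          ∑ _j : Fin d, 2 * (B + D) * wSob (s₁ + 1) δ₁ u * wSob (s₂ + 1) δ₂ v := by
          rw [wSob_zero]
          gcongr with j
          · exact hA' u v hu hv
          · exact hj j
      _ = _ := by
          rw [Finset.sum_const, Finset.card_univ, Fintype.card_fin, nsmul_eq_mul]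
          ring

end Leibniz

/-! ### The norms on Euclidean space -/

section HNorm

variable {n : ℕ}

theorem lintegral_ofReal_weighted_eq (m : ℕ) (δ : ℝ) (u : EuclideanSpace ℝ (Fin n) → ℝ) :
    ∫⁻ x, ENNReal.ofReal (‖iteratedFDeriv ℝ m u x‖ ^ 2 * (1 + ‖x‖ ^ 2) ^ ((m : ℝ) + δ)) =
      ∫⁻ x, ‖iteratedFDeriv ℝ m u x‖ₑ ^ 2 * wt (m + δ) x := by
  refine lintegral_congr fun x => ?_
  rw [ENNReal.ofReal_mul (by positivity), ENNReal.ofReal_pow (norm_nonneg _), ofReal_norm, wt]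

theorem aestronglyMeasurable_weighted {s m : ℕ} (hm : m ≤ s) (δ : ℝ)
    {u : EuclideanSpace ℝ (Fin n) → ℝ} (hu : ContDiff ℝ s u) :
    AEStronglyMeasurable (fun x : EuclideanSpace ℝ (Fin n) =>
      ‖iteratedFDeriv ℝ m u x‖ ^ 2 * (1 + ‖x‖ ^ 2) ^ ((m : ℝ) + δ)) := by
  have h1 := (hu.continuous_iteratedFDeriv (m := m) (by exact_mod_cast hm)).norm.pow 2
  have h2 : Measurable fun x : EuclideanSpace ℝ (Fin n) =>
    (1 + ‖x‖ ^ 2) ^ ((m : ℝ) + δ) := by fun_prop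
  exact (h1.measurable.mul h2).aestronglyMeasurable

theorem finiteHNorm_iff {s : ℕ} (δ : ℝ) {u : EuclideanSpace ℝ (Fin n) → ℝ}
    (hu : ContDiff ℝ s u) : FiniteHNorm n s δ u ↔ wSob s δ u ≠ ∞ := by
  rw [wSob, ENNReal.sum_ne_top, FiniteHNorm]
  refine forall_congr' fun m => ?_
  rw [Finset.mem_range, Nat.lt_succ_iff]
  refine forall_congr' fun hm => ?_
  rw [← lintegral_ofReal_ne_top_iff_integrable (aestronglyMeasurable_weighted hm δ hu)
    (.of_forall fun x => by positivity), lintegral_ofReal_weighted_eq]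

theorem hNorm_eq {s : ℕ} {δ : ℝ} {u : EuclideanSpace ℝ (Fin n) → ℝ}
    (hu : ContDiff ℝ s u) (hfin : wSob s δ u ≠ ∞) : HNorm n s δ u = √(wSob s δ u).toReal := by
  rw [HNorm, wSob, ENNReal.toReal_sum (ENNReal.sum_ne_top.1 hfin)]
  congr 1
  refine Finset.sum_congr rfl fun m hm => ?_
  rw [integral_eq_lintegral_of_nonneg_ae (.of_forall fun x => by positivity)
    (aestronglyMeasurable_weighted (by have := Finset.mem_range.1 hm; omega) δ hu),
    lintegral_ofReal_weighted_eq]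

end HNorm

/-- Multiplication property of weighted Sobolev spaces on Euclidean space:
if `s ≤ s₁`, `s ≤ s₂`, `s < s₁ + s₂ - n/2` and `δ < δ₁ + δ₂ + n/2`, then there is a
constant `C > 0` such that the pointwise product of a `C^{s₁}` function with finite
`H_{s₁,δ₁}`-norm and a `C^{s₂}` function with finite `H_{s₂,δ₂}`-norm has finite
`H_{s,δ}`-norm, with `‖u₁·u₂‖_{H_{s,δ}} ≤ C ‖u₁‖_{H_{s₁,δ₁}} ‖u₂‖_{H_{s₂,δ₂}}`. -/
theorem weighted_sobolev_multiplication (n : ℕ) (hn : 1 ≤ n)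
    (s s₁ s₂ : ℕ) (δ δ₁ δ₂ : ℝ)
    (h₁ : s ≤ s₁) (h₂ : s ≤ s₂)
    (hs : (s : ℝ) < (s₁ : ℝ) + (s₂ : ℝ) - n / 2)
    (hδ : δ < δ₁ + δ₂ + n / 2) :
    ∃ C : ℝ, 0 < C ∧
      ∀ u₁ u₂ : EuclideanSpace ℝ (Fin n) → ℝ,
        ContDiff ℝ s₁ u₁ → FiniteHNorm n s₁ δ₁ u₁ →
        ContDiff ℝ s₂ u₂ → FiniteHNorm n s₂ δ₂ u₂ →
        FiniteHNorm n s δ (fun x => u₁ x * u₂ x) ∧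
        HNorm n s δ (fun x => u₁ x * u₂ x) ≤
          C * HNorm n s₁ δ₁ u₁ * HNorm n s₂ δ₂ u₂ := by
  obtain ⟨C, hC, h⟩ := wSob_mul_le (V := EuclideanSpace ℝ (Fin n)) s (δ := δ) (δ₁ := δ₁)
    (δ₂ := δ₂) h₁ h₂ (by rw [finrank_euclideanSpace_fin]; linarith)
    (by rw [finrank_euclideanSpace_fin]; exact hδ.le)
  refine ⟨√C.toReal + 1, by positivity, fun u₁ u₂ hu₁ hf₁ hu₂ hf₂ => ?_⟩
  have hu : ContDiff ℝ s (fun x => u₁ x * u₂ x) :=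
    (hu₁.of_le (by exact_mod_cast h₁)).mul (hu₂.of_le (by exact_mod_cast h₂))
  have h12 := h u₁ u₂ hu₁ hu₂
  rw [finiteHNorm_iff δ₁ hu₁] at hf₁
  rw [finiteHNorm_iff δ₂ hu₂] at hf₂
  have hR : C * wSob s₁ δ₁ u₁ * wSob s₂ δ₂ u₂ ≠ ∞ := by finiteness
  have hf := ne_top_of_le_ne_top hR h12
  refine ⟨(finiteHNorm_iff δ hu).2 hf, ?_⟩
  rw [hNorm_eq hu hf, hNorm_eq hu₁ hf₁, hNorm_eq hu₂ hf₂]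
  calc _ ≤ √(C * wSob s₁ δ₁ u₁ * wSob s₂ δ₂ u₂).toReal :=
        Real.sqrt_le_sqrt (ENNReal.toReal_mono hR h12)
    _ = √C.toReal * √(wSob s₁ δ₁ u₁).toReal * √(wSob s₂ δ₂ u₂).toReal := by
        rw [ENNReal.toReal_mul, ENNReal.toReal_mul, Real.sqrt_mul (by positivity),
          Real.sqrt_mul (by positivity)]
    _ ≤ _ := by
        gcongr
        linarith
end
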